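/- Let A_1, A_2 > 1 and c_1, c_2 > 0 be real numbers, and let E(A_1,A_2) = { x ∈ (0,1) irrational : c_1·A_1^n ≤ a_n(x) < 2·c_1·A_1^n and c_2·A_2^n ≤ a_{n+1}(x) < 2·c_2·A_2^n for infinitely many n ∈ ℕ }. Then dim_H E(A_1,A_2) = min{ s_{A_1}, g_{A_1·A_2, A_1} }. -/

import Mathlib

open Filter MeasureTheory Set

/-- The Gauss map `T(x) = 1/x - ⌊1/x⌋`. -/
noncomputable def gaussMap (x : ℝ) : ℝ := 1 / x - (⌊1 / x⌋ : ℤ)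

/-- The `n`-th partial quotient `a_n(x)` (for `n ≥ 1`) of the continued
fraction expansion of `x`: `a_n(x) = ⌊1 / T^{n-1}(x)⌋`. -/
noncomputable def pq (x : ℝ) (n : ℕ) : ℕ := ⌊1 / (gaussMap^[n - 1] x)⌋₊

/-- The continuant `q_n(a_1, …, a_n)`: `q_0 = 1`, `q_1 = a_1`,
`q_k = a_k q_{k-1} + q_{k-2}`. -/
def contQ : (n : ℕ) → (Fin n → ℕ) → ℕ
  | 0, _ => 1
  | 1, a => a 0
  | (n + 2), a =>
      a (Fin.last (n + 1)) * contQ (n + 1) (Fin.init a) +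
        contQ n (Fin.init (Fin.init a))

/-- `s_B`: the Wang–Wu pressure exponent. -/
noncomputable def sExp (B : ℝ) : ℝ :=
  sInf {s : ℝ | 0 ≤ s ∧
    Filter.atTop.limsup (fun n : ℕ =>
      (((n : ℝ)⁻¹ : ℝ) : EReal) * ENNReal.log (∑' a : Fin n → ℕ+,
        ENNReal.ofReal ((B ^ n * ((contQ n fun i => (a i : ℕ)) : ℝ) ^ 2) ^ (-s)))) ≤ 0}

/-- `g_{B₁,B₂}`: the two-parameter pressure exponent. -/
noncomputable def gExp (B₁ B₂ : ℝ) : ℝ :=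
  sInf {s : ℝ | 0 ≤ s ∧
    Filter.atTop.limsup (fun n : ℕ =>
      (((n : ℝ)⁻¹ : ℝ) : EReal) * ENNReal.log (∑' a : Fin n → ℕ+,
        ENNReal.ofReal (B₂ ^ ((1 - s) * (n : ℝ)) *
          (B₁ ^ n * ((contQ n fun i => (a i : ℕ)) : ℝ) ^ 2) ^ (-s)))) ≤ 0}

namespace HLS

noncomputable def phi : List ℕ → ℝ → ℝ
  | [], t => t
  | a :: w, t => 1 / ((a : ℝ) + phi w t)

noncomputable def den : List ℕ → ℝ → ℝ
  | [], _ => 1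
  | a :: w, t => ((a : ℝ) + phi w t) * den w t

def Pos (w : List ℕ) : Prop := ∀ a ∈ w, 1 ≤ a

def stp (p : ℕ × ℕ) (a : ℕ) : ℕ × ℕ := (p.2, p.1 + a * p.2)

def QQ (w : List ℕ) : ℕ × ℕ := w.foldl stp (0, 1)

def Q (w : List ℕ) : ℕ := (QQ w).2

lemma Pos.cons {a : ℕ} {w : List ℕ} (h : Pos (a :: w)) : 1 ≤ a ∧ Pos w := by
  simpa [Pos] using h

lemma Pos.append {v w : List ℕ} (hv : Pos v) (hw : Pos w) : Pos (v ++ w) := by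
  intro a ha
  rcases List.mem_append.1 ha with h | h
  · exact hv a h
  · exact hw a h

lemma Pos.left {v w : List ℕ} (h : Pos (v ++ w)) : Pos v :=
  fun a ha => h a (List.mem_append_left _ ha)

lemma Pos.right {v w : List ℕ} (h : Pos (v ++ w)) : Pos w :=
  fun a ha => h a (List.mem_append_right _ ha)

lemma phi_nonneg {w : List ℕ} {t : ℝ} (ht : 0 ≤ t) : 0 ≤ phi w t := by
  induction w with
  | nil => simpa [phi]
  | cons a w ih => simp only [phi]; positivity

lemma phi_le_one {w : List ℕ} {t : ℝ} (hw : Pos w) (ht : 0 ≤ t) (ht1 : t ≤ 1) : phi w t ≤ 1 := by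
  cases w with
  | nil => simpa [phi]
  | cons a w =>
    have h1 : (1 : ℝ) ≤ a := by exact_mod_cast hw.cons.1
    have := phi_nonneg (w := w) ht
    simp only [phi]
    rw [div_le_one (by linarith)]; linarith

lemma phi_append (v w : List ℕ) (t : ℝ) : phi (v ++ w) t = phi v (phi w t) := by
  induction v with
  | nil => simp [phi]
  | cons a v ih => simp [phi, ih]

lemma den_append (v w : List ℕ) (t : ℝ) : den (v ++ w) t = den v (phi w t) * den w t := by
  induction v with
  | nil => simp [den]
  | cons a v ih => simp [den, ih, phi_append, mul_assoc]

lemma den_pos {w : List ℕ} {t : ℝ} (hw : Pos w) (ht : 0 ≤ t) : 0 < den w t := by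
  induction w with
  | nil => simp [den]
  | cons a w ih =>
    have h1 : (1 : ℝ) ≤ a := by exact_mod_cast hw.cons.1
    have := phi_nonneg (w := w) ht
    have := ih hw.cons.2
    simp only [den]; positivity

lemma phi_sub {w : List ℕ} {t t' : ℝ} (hw : Pos w) (ht : 0 ≤ t) (ht' : 0 ≤ t') :
    |phi w t - phi w t'| = |t - t'| / (den w t * den w t') := by
  induction w with
  | nil => simp [phi, den]
  | cons a w ih =>
    have h1 : (1 : ℝ) ≤ a := by exact_mod_cast hw.cons.1
    have h2 := phi_nonneg (w := w) ht
    have h3 := phi_nonneg (w := w) ht'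
    have h4 := den_pos hw.cons.2 ht
    have h5 := den_pos hw.cons.2 ht'
    have e := ih hw.cons.2
    simp only [phi, den]
    have p1 : 0 < (a : ℝ) + phi w t := by linarith
    have p2 : 0 < (a : ℝ) + phi w t' := by linarith
    rw [show 1 / ((a : ℝ) + phi w t) - 1 / ((a : ℝ) + phi w t')
      = -(phi w t - phi w t') / (((a : ℝ) + phi w t) * ((a : ℝ) + phi w t')) by
        field_simp; ring, abs_div, abs_neg, e, abs_of_pos (mul_pos p1 p2)]
    field_simp

lemma den_eq_aux {w : List ℕ} {t : ℝ} (hw : Pos w) (ht : 0 ≤ t) (u v : ℕ) :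
    (((w.foldl stp (u, v)).2 : ℝ) + ((w.foldl stp (u, v)).1 : ℝ) * t)
      = den w t * (v + u * phi w t) := by
  induction w generalizing u v with
  | nil => simp [phi, den]
  | cons a w ih =>
    have h1 : (1 : ℝ) ≤ a := by exact_mod_cast hw.cons.1
    have h2 := phi_nonneg (w := w) ht
    have p1 : 0 < (a : ℝ) + phi w t := by linarith
    simp only [List.foldl_cons, stp, phi, den]
    have := ih hw.cons.2 v (u + a * v)
    rw [this]
    push_cast
    field_simp
    ring

lemma den_eq {w : List ℕ} {t : ℝ} (hw : Pos w) (ht : 0 ≤ t) :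
    den w t = (Q w : ℝ) + ((QQ w).1 : ℝ) * t := by
  have := den_eq_aux hw ht 0 1
  simp at this
  exact this.symm

lemma QQ_concat (w : List ℕ) (a : ℕ) : QQ (w ++ [a]) = (Q w, (QQ w).1 + a * Q w) := by
  simp [QQ, Q, stp]

lemma Q_concat (w : List ℕ) (a : ℕ) : Q (w ++ [a]) = (QQ w).1 + a * Q w := by
  rw [Q, QQ_concat]

lemma Q_nil : Q [] = 1 := rfl

lemma Q_facts (w : List ℕ) (hw : Pos w) :
    1 ≤ Q w ∧ (QQ w).1 ≤ Q w ∧ w.length ≤ Q w ∧ (w ≠ [] → 1 ≤ (QQ w).1) := by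
  induction w using List.reverseRecOn with
  | nil => simp [Q, QQ]
  | append_singleton w a ih =>
    obtain ⟨h1, h2, h3, h4⟩ := ih hw.left
    have ha : 1 ≤ a := hw a (by simp)
    rw [Q_concat, QQ_concat]
    have : Q w ≤ a * Q w := Nat.le_mul_of_pos_left _ ha
    refine ⟨by omega, by simp only; omega, ?_, fun _ => h1⟩
    by_cases hne : w = []
    · subst hne; simp [Q_nil]; omega
    · have := h4 hne; simp; omega

lemma one_le_Q {w : List ℕ} (hw : Pos w) : (1 : ℝ) ≤ Q w := by exact_mod_cast (Q_facts w hw).1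

lemma Q_le_den {w : List ℕ} {t : ℝ} (hw : Pos w) (ht : 0 ≤ t) : (Q w : ℝ) ≤ den w t := by
  rw [den_eq hw ht]
  have : (0 : ℝ) ≤ ((QQ w).1 : ℝ) * t := by positivity
  linarith

lemma den_le {w : List ℕ} {t : ℝ} (hw : Pos w) (ht : 0 ≤ t) (ht1 : t ≤ 1) :
    den w t ≤ 2 * Q w := by
  rw [den_eq hw ht]
  have h : ((QQ w).1 : ℝ) ≤ Q w := by exact_mod_cast (Q_facts w hw).2.1
  have : ((QQ w).1 : ℝ) * t ≤ (QQ w).1 := mul_le_of_le_one_right (by positivity) ht1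
  linarith

lemma Q_eq_den {w : List ℕ} (hw : Pos w) : (Q w : ℝ) = den w 0 := by
  rw [den_eq hw le_rfl]; simp

lemma Q_append_le {v w : List ℕ} (hv : Pos v) (hw : Pos w) :
    (Q (v ++ w) : ℝ) ≤ 2 * Q v * Q w := by
  rw [Q_eq_den (hv.append hw), den_append, ← Q_eq_den hw]
  have := den_le hv (phi_nonneg (w := w) le_rfl) (phi_le_one hw le_rfl zero_le_one)
  gcongr

lemma le_Q_append {v w : List ℕ} (hv : Pos v) (hw : Pos w) :
    (Q v : ℝ) * Q w ≤ Q (v ++ w) := by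
  rw [Q_eq_den (hv.append hw), den_append, ← Q_eq_den hw]
  have := Q_le_den hv (phi_nonneg (w := w) (t := 0) le_rfl)
  gcongr

lemma phi_sub_le {w : List ℕ} {t t' : ℝ} (hw : Pos w) (ht : 0 ≤ t) (ht' : 0 ≤ t') :
    |phi w t - phi w t'| ≤ |t - t'| / (Q w : ℝ) ^ 2 := by
  rw [phi_sub hw ht ht', sq]
  have := one_le_Q hw
  have := (den_pos hw ht).le
  have := Q_le_den hw ht
  have := Q_le_den hw ht'
  gcongr

lemma le_phi_sub {w : List ℕ} {t t' : ℝ} (hw : Pos w) (ht : 0 ≤ t) (ht' : 0 ≤ t')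
    (h1 : t ≤ 1) (h1' : t' ≤ 1) :
    |t - t'| / (4 * (Q w : ℝ) ^ 2) ≤ |phi w t - phi w t'| := by
  rw [phi_sub hw ht ht', show 4 * (Q w : ℝ) ^ 2 = (2 * Q w) * (2 * Q w) by ring]
  have := den_le hw ht h1
  have := den_le hw ht' h1'
  have := den_pos hw ht
  have := den_pos hw ht'
  gcongr

lemma contQ_eq (n : ℕ) (a : Fin n → ℕ) : contQ n a = Q (List.ofFn a) := by
  induction n using Nat.strong_induction_on with
  | _ n ih =>
    match n, a with
    | 0, a => simp [contQ, Q_nil]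
    | 1, a => simp [contQ, Q, QQ, stp]
    | n + 2, a =>
      have e1 : List.ofFn a = List.ofFn (Fin.init a) ++ [a (Fin.last _)] := by
        rw [List.ofFn_succ']; simp [List.concat_eq_append, Fin.init_def]
      have e2 : List.ofFn (Fin.init a)
          = List.ofFn (Fin.init (Fin.init a)) ++ [Fin.init a (Fin.last _)] := by
        rw [List.ofFn_succ']; simp [List.concat_eq_append, Fin.init_def]
      rw [contQ, ih (n+1) (by omega), ih n (by omega), e1, Q_concat]
      conv_rhs => rw [e2, QQ_concat, ← e2]
      ring

/-! ### digits -/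

lemma gauss_inv {a : ℕ} {t : ℝ} (h0 : 0 ≤ t) (h1 : t < 1) :
    gaussMap (1 / ((a : ℝ) + t)) = t ∧ ⌊1 / (1 / ((a : ℝ) + t))⌋₊ = a := by
  have e : ⌊(a : ℝ) + t⌋ = a := by
    rw [Int.floor_eq_iff]; constructor <;> push_cast <;> linarith
  constructor
  · simp only [gaussMap, one_div_one_div, e]; simp
  · rw [one_div_one_div, Nat.floor_eq_iff (by positivity)]; constructor <;> linarith

lemma pq_succ (x : ℝ) (n : ℕ) : pq x (n + 2) = pq (gaussMap x) (n + 1) := by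
  simp [pq, Function.iterate_succ_apply]

lemma phi_lt_one {w : List ℕ} {t : ℝ} (hw : Pos w) (ht : 0 < t) (ht1 : t < 1) :
    0 < phi w t ∧ phi w t < 1 := by
  induction w with
  | nil => simpa [phi] using ⟨ht, ht1⟩
  | cons a w ih =>
    obtain ⟨h0, h2⟩ := ih hw.cons.2
    have h1 : (1 : ℝ) ≤ a := by exact_mod_cast hw.cons.1
    simp only [phi]
    exact ⟨by positivity, by rw [div_lt_one (by linarith)]; linarith⟩

lemma pq_phi {v w : List ℕ} {a : ℕ} {t : ℝ} (hv : Pos (v ++ a :: w)) (ht : 0 < t) (ht1 : t < 1) :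
    pq (phi (v ++ a :: w) t) (v.length + 1) = a := by
  induction v with
  | nil =>
    have := phi_lt_one hv.cons.2 ht ht1
    simpa [pq, phi] using (gauss_inv (a := a) this.1.le this.2).2
  | cons b v ih =>
    have hp : Pos (v ++ a :: w) := (Pos.cons (a := b) hv).2
    have := phi_lt_one hp ht ht1
    have e := (gauss_inv (a := b) this.1.le this.2).1
    rw [List.length_cons, pq_succ, List.cons_append, phi, e]
    exact ih hp

lemma irr_step {x : ℝ} (hx : x ∈ Ioo (0:ℝ) 1) (hi : Irrational x) :
    gaussMap x ∈ Ioo (0:ℝ) 1 ∧ Irrational (gaussMap x) ∧ 1 ≤ ⌊1 / x⌋₊ ∧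
      x = 1 / ((⌊1 / x⌋₊ : ℝ) + gaussMap x) := by
  have hf : gaussMap x = Int.fract (1 / x) := rfl
  have hinv : Irrational (1 / x) := by rw [one_div]; exact irrational_inv_iff.2 hi
  have hir : Irrational (gaussMap x) := by
    unfold gaussMap; exact hinv.sub_intCast _
  have h1 : 1 < 1 / x := by rw [lt_div_iff₀ hx.1]; linarith [hx.2]
  refine ⟨⟨lt_of_le_of_ne ?_ ?_, ?_⟩, hir, ?_, ?_⟩
  · rw [hf]; exact Int.fract_nonneg _
  · exact hir.ne_zero.symm
  · rw [hf]; exact Int.fract_lt_one _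
  · exact Nat.le_floor (by simpa using h1.le)
  · have : ((⌊1 / x⌋₊ : ℝ)) = (⌊1 / x⌋ : ℤ) := natCast_floor_eq_intCast_floor (by linarith)
    rw [this, gaussMap]; simp

lemma irr_iter {x : ℝ} (hx : x ∈ Ioo (0:ℝ) 1) (hi : Irrational x) (n : ℕ) :
    gaussMap^[n] x ∈ Ioo (0:ℝ) 1 ∧ Irrational (gaussMap^[n] x) := by
  induction n with
  | zero => exact ⟨hx, hi⟩
  | succ n ih =>
    rw [Function.iterate_succ_apply']
    have := irr_step ih.1 ih.2
    exact ⟨this.1, this.2.1⟩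

lemma pq_pos {x : ℝ} (hx : x ∈ Ioo (0:ℝ) 1) (hi : Irrational x) (n : ℕ) : 1 ≤ pq x n := by
  have := irr_iter hx hi (n - 1)
  exact (irr_step this.1 this.2).2.2.1

lemma phi_digits {x : ℝ} (hx : x ∈ Ioo (0:ℝ) 1) (hi : Irrational x) (n : ℕ) :
    x = phi (List.ofFn (fun i : Fin n => pq x (i + 1))) (gaussMap^[n] x) := by
  induction n with
  | zero => simp [phi]
  | succ n ih =>
    have := irr_iter hx hi n
    have h := (irr_step this.1 this.2).2.2.2
    rw [List.ofFn_succ', List.concat_eq_append, phi_append]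
    simp only [Fin.val_castSucc, Fin.val_last, phi, Function.iterate_succ_apply']
    rw [show ((pq x (n+1) : ℕ) : ℝ) = (⌊1 / gaussMap^[n] x⌋₊ : ℝ) by simp [pq], ← h]
    exact ih

lemma iter_le {x : ℝ} (hx : x ∈ Ioo (0:ℝ) 1) (hi : Irrational x) (n : ℕ) {R : ℝ} (hR : 0 < R)
    (h : R ≤ pq x (n + 1)) : gaussMap^[n] x ≤ 1 / R := by
  have := irr_iter hx hi n
  have h1 := irr_step this.1 this.2
  rw [h1.2.2.2]
  simp only [pq, Nat.add_sub_cancel] at h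
  gcongr
  linarith [h1.1.1]

end HLS

namespace HLS

/-! ### pressure -/

lemma log_key {n : ℕ} (hn : 1 ≤ n) (u : ENNReal) (δ : ℝ) :
    (((n : ℝ)⁻¹ : ℝ) : EReal) * ENNReal.log u ≤ (δ : EReal) ↔
      u ≤ ENNReal.ofReal (Real.exp (δ * n)) := by
  have hn0 : (0 : ℝ) < n := by exact_mod_cast hn
  have hi : (0 : ℝ) < (n : ℝ)⁻¹ := by positivity
  rcases eq_or_ne u 0 with rfl | h0
  · simp [EReal.coe_mul_bot_of_pos hi]
  rcases eq_or_ne u ⊤ with rfl | h1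
  · simp [EReal.coe_mul_top_of_pos hi]
  have hpos := ENNReal.toReal_pos h0 h1
  rw [ENNReal.log_pos_real h0 h1, ← EReal.coe_mul, EReal.coe_le_coe_iff,
    ENNReal.le_ofReal_iff_toReal_le h1 (Real.exp_pos _).le, ← Real.log_le_iff_le_exp hpos,
    inv_mul_le_iff₀ hn0, mul_comm]

lemma press_nonpos {u : ℕ → ENNReal}
    (h : atTop.limsup (fun n : ℕ => (((n : ℝ)⁻¹ : ℝ) : EReal) * ENNReal.log (u n)) ≤ 0)
    {ε : ℝ} (hε : 0 < ε) : ∀ᶠ n in atTop, u n ≤ ENNReal.ofReal (Real.exp (ε * n)) := by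
  have : atTop.limsup (fun n : ℕ => (((n : ℝ)⁻¹ : ℝ) : EReal) * ENNReal.log (u n)) < (ε : EReal) :=
    lt_of_le_of_lt h (by exact_mod_cast hε)
  filter_upwards [eventually_lt_of_limsup_lt this, eventually_ge_atTop 1] with n h1 h2
  exact (log_key h2 _ _).1 h1.le

lemma press_pos {u : ℕ → ENNReal}
    (h : ¬ atTop.limsup (fun n : ℕ => (((n : ℝ)⁻¹ : ℝ) : EReal) * ENNReal.log (u n)) ≤ 0) :
    ∃ δ : ℝ, 0 < δ ∧ ∃ᶠ n : ℕ in atTop, ENNReal.ofReal (Real.exp (δ * n)) < u n := by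
  obtain ⟨δ, h0, h1⟩ := EReal.lt_iff_exists_real_btwn.1 (not_le.1 h)
  refine ⟨δ, by exact_mod_cast h0, ?_⟩
  have h2 := frequently_lt_of_lt_limsup (by isBoundedDefault) h1
  refine (h2.and_eventually (eventually_ge_atTop 1)).mono ?_
  rintro n ⟨h3, h4⟩
  have := (log_key h4 (u n) δ).not.1 (not_le.2 h3)
  exact not_le.1 this

lemma press_le {u : ℕ → ENNReal} {C : ℝ}
    (h : ∀ n, u n ≤ ENNReal.ofReal C) :
    atTop.limsup (fun n : ℕ => (((n : ℝ)⁻¹ : ℝ) : EReal) * ENNReal.log (u n)) ≤ 0 := by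
  by_contra hc
  obtain ⟨δ, h0, h1⟩ := press_pos hc
  have : Tendsto (fun n : ℕ => Real.exp (δ * n)) atTop atTop :=
    Real.tendsto_exp_atTop.comp (tendsto_natCast_atTop_atTop.const_mul_atTop h0)
  obtain ⟨n, h2, h3⟩ := (h1.and_eventually (this.eventually_ge_atTop C)).exists
  exact absurd (h2.trans_le (h n)) (not_lt.2 (ENNReal.ofReal_le_ofReal h3))

/-! ### `1` belongs to the exponent sets -/

def wd {n : ℕ} (a : Fin n → ℕ+) : List ℕ := List.ofFn fun i => (a i : ℕ)

lemma wd_pos {n : ℕ} (a : Fin n → ℕ+) : Pos (wd a) := by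
  intro b hb
  obtain ⟨i, rfl⟩ := (List.mem_ofFn' _ _).1 hb
  exact (a i).2

lemma wd_length {n : ℕ} (a : Fin n → ℕ+) : (wd a).length = n := by simp [wd]

lemma tele (t : ℝ) (ht : 0 ≤ t) :
    ∑' a : ℕ+, ENNReal.ofReal (1 / (((a : ℕ) : ℝ) + t) - 1 / (((a : ℕ) : ℝ) + 1 + t))
      ≤ ENNReal.ofReal (1 / (1 + t)) := by
  rw [tsum_pnat_eq_tsum_succ
    (f := fun a : ℕ => ENNReal.ofReal (1 / ((a : ℝ) + t) - 1 / ((a : ℝ) + 1 + t)))]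
  refine ENNReal.tsum_le_of_sum_range_le fun n => ?_
  have hnn : ∀ i : ℕ, 0 ≤ 1 / (((i + 1 : ℕ) : ℝ) + t) - 1 / (((i + 1 : ℕ) : ℝ) + 1 + t) := by
    intro i
    have : 1 / (((i + 1 : ℕ) : ℝ) + 1 + t) ≤ 1 / (((i + 1 : ℕ) : ℝ) + t) := by
      push_cast; gcongr; linarith
    linarith
  rw [← ENNReal.ofReal_sum_of_nonneg (fun i _ => hnn i)]
  apply ENNReal.ofReal_le_ofReal
  have := Finset.sum_range_sub' (fun i : ℕ => 1 / (((i + 1 : ℕ) : ℝ) + t)) n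
  have e : ∑ i ∈ Finset.range n, (1 / (((i + 1 : ℕ) : ℝ) + t) - 1 / (((i + 1 : ℕ) : ℝ) + 1 + t))
     = ∑ i ∈ Finset.range n, (1 / (((i + 1 : ℕ) : ℝ) + t) - 1 / (((i + 1 + 1 : ℕ) : ℝ) + t)) := by
    simp
  rw [e, this]
  have : 0 ≤ 1 / (((n + 1 : ℕ) : ℝ) + t) := by positivity
  simp at *
  linarith

lemma sum_den (n : ℕ) : ∀ t : ℝ, 0 ≤ t → t ≤ 1 →
    ∑' a : Fin n → ℕ+, ENNReal.ofReal (1 / (1 + phi (wd a) t) / (den (wd a) t) ^ 2)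
      ≤ ENNReal.ofReal (1 / (1 + t)) := by
  induction n with
  | zero => intro t _ _; simp [wd, phi, den]
  | succ n ih =>
    intro t ht ht1
    rw [← (Fin.snocEquiv (fun _ : Fin (n + 1) => ℕ+)).tsum_eq, ENNReal.tsum_prod']
    refine le_trans (ENNReal.tsum_le_tsum fun a => ?_) (tele t ht)
    have ha : (1 : ℝ) ≤ ((a : ℕ) : ℝ) := by exact_mod_cast a.2
    have e : ∀ f : Fin n → ℕ+, wd ((Fin.snocEquiv (fun _ : Fin (n + 1) => ℕ+)) (a, f))
        = wd f ++ [(a : ℕ)] := by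
      intro f
      rw [wd, List.ofFn_succ', List.concat_eq_append]
      simp [wd, Fin.snocEquiv]
    have h1 : 0 ≤ 1 / (((a : ℕ) : ℝ) + t) := by positivity
    have h2 : 1 / (((a : ℕ) : ℝ) + t) ≤ 1 := by
      rw [div_le_one (by positivity)]; linarith
    have h3 := ih _ h1 h2
    have e2 : ∀ f : Fin n → ℕ+,
        ENNReal.ofReal (1 / (1 + phi (wd ((Fin.snocEquiv (fun _ : Fin (n + 1) => ℕ+)) (a, f))) t)
          / (den (wd ((Fin.snocEquiv (fun _ : Fin (n + 1) => ℕ+)) (a, f))) t) ^ 2)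
        = ENNReal.ofReal (1 / (((a : ℕ) : ℝ) + t) ^ 2) *
          ENNReal.ofReal (1 / (1 + phi (wd f) (1 / (((a : ℕ) : ℝ) + t)))
            / (den (wd f) (1 / (((a : ℕ) : ℝ) + t))) ^ 2) := by
      intro f
      rw [← ENNReal.ofReal_mul (by positivity), e, phi_append, den_append]
      simp only [phi, den]
      congr 1
      simp only [div_eq_mul_inv, mul_pow, mul_inv, one_mul, mul_one]
      ring
    simp_rw [e2]
    rw [ENNReal.tsum_mul_left]
    refine (mul_le_mul_right h3 _).trans ?_
    rw [← ENNReal.ofReal_mul (by positivity)]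
    apply ENNReal.ofReal_le_ofReal
    apply le_of_eq
    have : (0:ℝ) < ((a : ℕ) : ℝ) + t := by linarith
    have : (0:ℝ) < ((a : ℕ) : ℝ) + 1 + t := by linarith
    field_simp
    ring

lemma sum_Q (n : ℕ) :
    ∑' a : Fin n → ℕ+, ENNReal.ofReal (((Q (wd a) : ℝ) ^ 2)⁻¹) ≤ ENNReal.ofReal 2 := by
  have h := sum_den n 0 le_rfl zero_le_one
  calc ∑' a : Fin n → ℕ+, ENNReal.ofReal (((Q (wd a) : ℝ) ^ 2)⁻¹)
      ≤ ∑' a : Fin n → ℕ+, ENNReal.ofReal 2 *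
        ENNReal.ofReal (1 / (1 + phi (wd a) 0) / (den (wd a) 0) ^ 2) := by
        refine ENNReal.tsum_le_tsum fun a => ?_
        rw [← ENNReal.ofReal_mul (by positivity), ← Q_eq_den (wd_pos a)]
        apply ENNReal.ofReal_le_ofReal
        have h1 := phi_le_one (wd_pos a) le_rfl zero_le_one
        have h0 := phi_nonneg (w := wd a) (t := 0) le_rfl
        have h2 := one_le_Q (wd_pos a)
        have : 1 / 2 ≤ 1 / (1 + phi (wd a) 0) := by gcongr; linarith
        have h3 : 0 < ((Q (wd a) : ℝ) ^ 2)⁻¹ := by positivity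
        rw [div_eq_mul_inv _ ((Q (wd a) : ℝ) ^ 2)]
        nlinarith
    _ ≤ _ := by
        rw [ENNReal.tsum_mul_left]
        refine (mul_le_mul_right h _).trans ?_
        rw [← ENNReal.ofReal_mul (by positivity)]
        norm_num

def sSet (B : ℝ) : Set ℝ := {s : ℝ | 0 ≤ s ∧
    Filter.atTop.limsup (fun n : ℕ =>
      (((n : ℝ)⁻¹ : ℝ) : EReal) * ENNReal.log (∑' a : Fin n → ℕ+,
        ENNReal.ofReal ((B ^ n * (Q (wd a) : ℝ) ^ 2) ^ (-s)))) ≤ 0}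

def gSet (B₁ B₂ : ℝ) : Set ℝ := {s : ℝ | 0 ≤ s ∧
    Filter.atTop.limsup (fun n : ℕ =>
      (((n : ℝ)⁻¹ : ℝ) : EReal) * ENNReal.log (∑' a : Fin n → ℕ+,
        ENNReal.ofReal (B₂ ^ ((1 - s) * (n : ℝ)) *
          (B₁ ^ n * (Q (wd a) : ℝ) ^ 2) ^ (-s)))) ≤ 0}

lemma sExp_eq (B : ℝ) : sExp B = sInf (sSet B) := by
  simp only [sExp, contQ_eq]; rfl

lemma gExp_eq (B₁ B₂ : ℝ) : gExp B₁ B₂ = sInf (gSet B₁ B₂) := by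
  simp only [gExp, contQ_eq]; rfl

lemma inv_term_le {B : ℝ} (hB : 1 ≤ B) {n : ℕ} (a : Fin n → ℕ+) :
    (B ^ n * (Q (wd a) : ℝ) ^ 2) ^ (-1 : ℝ) ≤ ((Q (wd a) : ℝ) ^ 2)⁻¹ := by
  rw [Real.rpow_neg_one]
  have h2 := one_le_Q (wd_pos a)
  have : 1 ≤ B ^ n := one_le_pow₀ hB
  gcongr
  nlinarith [sq_nonneg (Q (wd a) : ℝ)]

lemma one_mem_sSet {B : ℝ} (hB : 1 ≤ B) : (1 : ℝ) ∈ sSet B := by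
  refine ⟨zero_le_one, press_le (C := 2) fun n => ?_⟩
  refine le_trans (ENNReal.tsum_le_tsum fun a => ?_) (sum_Q n)
  exact ENNReal.ofReal_le_ofReal (inv_term_le hB a)

lemma one_mem_gSet {B B₂ : ℝ} (hB : 1 ≤ B) : (1 : ℝ) ∈ gSet B B₂ := by
  refine ⟨zero_le_one, press_le (C := 2) fun n => ?_⟩
  refine le_trans (ENNReal.tsum_le_tsum fun a => ?_) (sum_Q n)
  apply ENNReal.ofReal_le_ofReal
  simpa using inv_term_le hB a

lemma sExp_le_one {B : ℝ} (hB : 1 ≤ B) : sExp B ≤ 1 := by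
  rw [sExp_eq]; exact csInf_le ⟨0, fun s hs => hs.1⟩ (one_mem_sSet hB)

/-! ### covering -/

lemma dimH_le_of_cover {ι : ℕ → Type} [∀ n, Countable (ι n)] (U : ∀ n, ι n → Set ℝ) (E : Set ℝ)
    (hE : ∀ x ∈ E, ∃ᶠ n in atTop, ∃ i, x ∈ U n i) {s : ℝ} (hs : 0 < s)
    {C τ : ℝ} (hC : 0 ≤ C) (hτ : 0 < τ) (hτ1 : τ < 1) (u : ℕ → ENNReal)
    (hu : atTop.limsup (fun n : ℕ => (((n : ℝ)⁻¹ : ℝ) : EReal) * ENNReal.log (u n)) ≤ 0)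
    (hU : ∀ n, ∑' i, Metric.ediam (U n i) ^ s ≤ ENNReal.ofReal (C * τ ^ n) * u n) :
    dimH E ≤ ENNReal.ofReal s := by
  set ρ : ℝ := Real.exp (Real.log τ / 2) with hρ
  have hlog : Real.log τ < 0 := Real.log_neg hτ hτ1
  have hρ1 : ρ < 1 := by rw [hρ, Real.exp_lt_one_iff]; linarith
  have hρ0 : 0 < ρ := Real.exp_pos _
  have hev : ∀ᶠ n in atTop, ∑' i, Metric.ediam (U n i) ^ s ≤ ENNReal.ofReal (C * ρ ^ n) := by
    filter_upwards [press_nonpos hu (ε := - Real.log τ / 2) (by linarith)] with n hn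
    refine (hU n).trans ((mul_le_mul_right hn _).trans ?_)
    rw [← ENNReal.ofReal_mul (by positivity)]
    apply ENNReal.ofReal_le_ofReal
    apply le_of_eq
    rw [mul_assoc]
    congr 1
    rw [hρ, ← Real.exp_nat_mul, ← Real.exp_log (pow_pos hτ n), Real.log_pow, ← Real.exp_add]
    congr 1; ring
  have hfin : ∑' n : ℕ, ENNReal.ofReal (C * ρ ^ n) ≠ ⊤ :=
    ((summable_geometric_of_lt_one hρ0.le hρ1).mul_left C).tsum_ofReal_ne_top
  have htail := ENNReal.tendsto_sum_nat_add _ hfin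
  set v : ℕ → ENNReal := fun i => ∑' (k : ℕ), ENNReal.ofReal (C * ρ ^ (k + i)) with hv
  obtain ⟨N0, hN0⟩ := eventually_atTop.1 hev
  have hsum : ∀ N ≥ N0, ∑' p : (Σ k : ℕ, ι (k + N)), Metric.ediam (U (p.1 + N) p.2) ^ s ≤ v N := by
    intro N hN
    rw [ENNReal.tsum_sigma (fun (k : ℕ) (i : ι (k + N)) => Metric.ediam (U (k + N) i) ^ s)]
    exact ENNReal.tsum_le_tsum fun k => hN0 _ (by omega)
  have key := Measure.hausdorffMeasure_le_liminf_tsum (X := ℝ) (β := ℕ)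
    (ι := fun N => Σ k : ℕ, ι (k + N)) s E (l := atTop) (fun N => (v N) ^ (1 / s))
    (by
      have := (ENNReal.continuous_rpow_const (y := 1 / s)).tendsto 0
      rw [ENNReal.zero_rpow_of_pos (by positivity)] at this
      exact this.comp htail)
    (fun N p => U (p.1 + N) p.2)
    (by
      filter_upwards [eventually_ge_atTop N0] with N hN p
      have h1 := (ENNReal.le_tsum (f := fun p : (Σ k : ℕ, ι (k + N)) =>
        Metric.ediam (U (p.1 + N) p.2) ^ s) p).trans (hsum N hN)
      have h2 := ENNReal.rpow_le_rpow h1 (z := 1 / s) (by positivity)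
      rwa [← ENNReal.rpow_mul, mul_one_div_cancel hs.ne', ENNReal.rpow_one] at h2)
    (by
      refine Eventually.of_forall fun N x hx => ?_
      obtain ⟨n, hn, i, hi⟩ := frequently_atTop.1 (hE x hx) N
      obtain ⟨k, rfl⟩ := Nat.exists_eq_add_of_le' hn
      exact mem_iUnion.2 ⟨⟨k, i⟩, hi⟩)
  have h0 : μH[s] E = 0 := by
    refine le_antisymm (key.trans ?_) (zero_le)
    rw [← htail.liminf_eq]
    refine liminf_le_liminf ?_
    filter_upwards [eventually_ge_atTop N0] with N hN using hsum N hN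
  have := dimH_le_of_hausdorffMeasure_ne_top (X := ℝ) (s := E) (d := s.toNNReal)
    (by rw [Real.coe_toNNReal _ hs.le, h0]; simp)
  exact this

lemma ediam_phi {w : List ℕ} (hw : Pos w) {ρ : ℝ} :
    Metric.ediam (phi w '' Icc 0 ρ) ≤ ENNReal.ofReal (ρ / (Q w : ℝ) ^ 2) := by
  apply Metric.ediam_le_of_forall_dist_le
  rintro _ ⟨t, ht, rfl⟩ _ ⟨t', ht', rfl⟩
  rw [Real.dist_eq]
  refine (phi_sub_le hw ht.1 ht'.1).trans ?_
  have := one_le_Q hw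
  gcongr
  rw [abs_le]; constructor <;> linarith [ht.1, ht.2, ht'.1, ht'.2]

def EE (A₁ A₂ c₁ c₂ : ℝ) : Set ℝ := {x : ℝ | x ∈ Set.Ioo (0 : ℝ) 1 ∧ Irrational x ∧
      {n : ℕ | (c₁ * A₁ ^ n ≤ (pq x n : ℝ) ∧ (pq x n : ℝ) < 2 * (c₁ * A₁ ^ n)) ∧
        (c₂ * A₂ ^ n ≤ (pq x (n + 1) : ℝ) ∧
          (pq x (n + 1) : ℝ) < 2 * (c₂ * A₂ ^ n))}.Infinite}

lemma EE_freq {A₁ A₂ c₁ c₂ x : ℝ} (hx : x ∈ EE A₁ A₂ c₁ c₂) : ∃ᶠ n in atTop,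
    (c₁ * A₁ ^ (n + 1) ≤ (pq x (n + 1) : ℝ) ∧ (pq x (n + 1) : ℝ) < 2 * (c₁ * A₁ ^ (n + 1))) ∧
        (c₂ * A₂ ^ (n + 1) ≤ (pq x (n + 2) : ℝ) ∧
          (pq x (n + 2) : ℝ) < 2 * (c₂ * A₂ ^ (n + 1))) := by
  rw [frequently_atTop]
  intro N
  obtain ⟨n, hn, hN⟩ := hx.2.2.exists_gt N
  obtain ⟨m, rfl⟩ : ∃ m, n = m + 1 := ⟨n - 1, by omega⟩
  exact ⟨m, by omega, hn⟩

lemma wd_digits {x : ℝ} (hx : x ∈ Ioo (0:ℝ) 1) (hi : Irrational x) (n : ℕ) :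
    ∃ a : Fin n → ℕ+, x = phi (wd a) (gaussMap^[n] x) :=
  ⟨fun i => ⟨pq x (i + 1), pq_pos hx hi _⟩, by simpa [wd] using phi_digits hx hi n⟩

lemma upper_s {A₁ A₂ c₁ c₂ : ℝ} (hA₁ : 1 < A₁) (hc₁ : 0 < c₁) {s : ℝ} (hs : sExp A₁ < s) :
    dimH (EE A₁ A₂ c₁ c₂) ≤ ENNReal.ofReal s := by
  rw [sExp_eq] at hs
  obtain ⟨s0, ⟨h0, hl⟩, h1⟩ := exists_lt_of_csInf_lt ⟨1, one_mem_sSet hA₁.le⟩ hs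
  have hA0 : 0 < A₁ := by linarith
  have hspos : 0 < s := by linarith
  refine dimH_le_of_cover (ι := fun n => (Fin n → ℕ+))
    (fun n w => phi (wd w) '' Icc 0 (1 / (c₁ * A₁ ^ (n + 1)))) _ ?_ hspos
    (C := (c₁ * A₁) ^ (-s)) (τ := A₁ ^ (-(s - s0))) (by positivity) (by positivity)
    (Real.rpow_lt_one_of_one_lt_of_neg hA₁ (by linarith)) _ hl ?_
  · intro x hx
    refine (EE_freq hx).mono fun n hn => ?_
    obtain ⟨a, ha⟩ := wd_digits hx.1 hx.2.1 n
    refine ⟨a, _, ⟨(irr_iter hx.1 hx.2.1 n).1.1.le, ?_⟩, ha.symm⟩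
    exact iter_le hx.1 hx.2.1 n (by positivity) hn.1.1
  · intro n
    rw [← ENNReal.tsum_mul_left]
    refine ENNReal.tsum_le_tsum fun w => ?_
    refine (ENNReal.rpow_le_rpow (ediam_phi (wd_pos w)) hspos.le).trans ?_
    have hq := one_le_Q (wd_pos w)
    rw [ENNReal.ofReal_rpow_of_nonneg (by positivity) hspos.le,
      ← ENNReal.ofReal_mul (by positivity)]
    apply ENNReal.ofReal_le_ofReal
    set y : ℝ := A₁ ^ n * (Q (wd w) : ℝ) ^ 2 with hy
    have hyA : A₁ ^ n ≤ y := le_mul_of_one_le_right (by positivity) (one_le_pow₀ hq)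
    have hy0 : 0 < y := lt_of_lt_of_le (by positivity) hyA
    have e1 : 1 / (c₁ * A₁ ^ (n + 1)) / (Q (wd w) : ℝ) ^ 2 = (c₁ * A₁ * y)⁻¹ := by
      rw [hy, pow_succ]; field_simp
    rw [e1, Real.inv_rpow (by positivity), ← Real.rpow_neg (by positivity),
      Real.mul_rpow (by positivity) hy0.le, mul_assoc]
    gcongr
    rw [show -s = -(s - s0) + -s0 by ring, Real.rpow_add hy0]
    gcongr
    rw [show (A₁ ^ (-(s - s0))) ^ n = (A₁ ^ n) ^ (-(s - s0)) by
      rw [← Real.rpow_natCast, ← Real.rpow_natCast, ← Real.rpow_mul hA0.le, ← Real.rpow_mul hA0.le,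
        mul_comm]]
    exact Real.rpow_le_rpow_of_nonpos (by positivity) hyA (by linarith)

lemma upper_g {A₁ A₂ c₁ c₂ : ℝ} (hA₁ : 1 < A₁) (hA₂ : 1 < A₂) (hc₁ : 0 < c₁) (hc₂ : 0 < c₂)
    {s : ℝ} (hs : gExp (A₁ * A₂) A₁ < s) :
    dimH (EE A₁ A₂ c₁ c₂) ≤ ENNReal.ofReal s := by
  rw [gExp_eq] at hs
  have hA12 : 1 ≤ A₁ * A₂ := by nlinarith
  obtain ⟨s0, ⟨h0, hl⟩, h1⟩ := exists_lt_of_csInf_lt ⟨1, one_mem_gSet hA12⟩ hs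
  have hA0 : 0 < A₁ := by linarith
  have hA20 : 0 < A₂ := by linarith
  have hspos : 0 < s := by linarith
  set K : ℝ := (c₂ * A₂ * c₁ ^ 2 * A₁ ^ 2)⁻¹ with hK
  have hK0 : 0 < K := by positivity
  refine dimH_le_of_cover (ι := fun n => (Fin n → ℕ+) × Fin ⌈2 * (c₁ * A₁ ^ (n + 1))⌉₊)
    (fun n p => {x | c₁ * A₁ ^ (n + 1) ≤ (p.2 : ℕ) ∧
      x ∈ phi (wd p.1 ++ [(p.2 : ℕ)]) '' Icc 0 (1 / (c₂ * A₂ ^ (n + 1)))}) _ ?_ hspos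
    (C := K ^ s * (2 * c₁ * A₁ + 1)) (τ := A₁ ^ (-(s - s0))) (by positivity) (by positivity)
    (Real.rpow_lt_one_of_one_lt_of_neg hA₁ (by linarith)) _ hl ?_
  · intro x hx
    refine (EE_freq hx).mono fun n hn => ?_
    obtain ⟨a, ha⟩ := wd_digits hx.1 hx.2.1 n
    refine ⟨(a, ⟨pq x (n + 1), ?_⟩), ?_⟩
    · exact Nat.lt_ceil.2 hn.1.2
    · refine ⟨hn.1.1, gaussMap^[n + 1] x, ⟨(irr_iter hx.1 hx.2.1 (n + 1)).1.1.le, ?_⟩, ?_⟩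
      · exact iter_le hx.1 hx.2.1 (n + 1) (by positivity) hn.2.1
      · have := irr_iter hx.1 hx.2.1 n
        have h := (irr_step this.1 this.2).2.2.2
        rw [phi_append, Function.iterate_succ_apply']
        simp only [phi]
        rw [show ((pq x (n+1) : ℕ) : ℝ) = (⌊1 / gaussMap^[n] x⌋₊ : ℝ) by simp [pq], ← h]
        exact ha.symm
  · intro n
    rw [← ENNReal.tsum_mul_left, ENNReal.tsum_prod']
    refine ENNReal.tsum_le_tsum fun w => ?_
    have hq := one_le_Q (wd_pos w)
    set y : ℝ := (A₁ * A₂) ^ n * (Q (wd w) : ℝ) ^ 2 with hy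
    have hyA : A₁ ^ n ≤ y := by
      rw [hy, mul_pow, mul_assoc]
      refine le_mul_of_one_le_right (by positivity) ?_
      exact one_le_mul_of_one_le_of_one_le (one_le_pow₀ hA₂.le) (one_le_pow₀ hq)
    have hAn : 1 ≤ A₁ ^ n := one_le_pow₀ hA₁.le
    have hy0 : 0 < y := lt_of_lt_of_le (by positivity) hyA
    have hb : ∀ b : Fin ⌈2 * (c₁ * A₁ ^ (n + 1))⌉₊,
        Metric.ediam {x | c₁ * A₁ ^ (n + 1) ≤ (b : ℕ) ∧
          x ∈ phi (wd w ++ [(b : ℕ)]) '' Icc 0 (1 / (c₂ * A₂ ^ (n + 1)))} ^ s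
        ≤ ENNReal.ofReal ((K / (A₁ ^ n * y)) ^ s) := by
      intro b
      rw [← ENNReal.ofReal_rpow_of_nonneg (by positivity) hspos.le]
      refine ENNReal.rpow_le_rpow ?_ hspos.le
      by_cases hcb : c₁ * A₁ ^ (n + 1) ≤ (b : ℕ)
      · simp only [hcb, true_and, ofPred_mem_eq]
        have hb0 : (0:ℝ) < (b : ℕ) := lt_of_lt_of_le (by positivity) hcb
        have hpos : Pos (wd w ++ [(b : ℕ)]) := by
          refine (wd_pos w).append ?_
          intro a ha
          simp only [List.mem_singleton] at ha
          rw [ha]; exact_mod_cast hb0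
        refine (ediam_phi hpos).trans (ENNReal.ofReal_le_ofReal ?_)
        have hQ : c₁ * A₁ ^ (n + 1) * Q (wd w) ≤ (Q (wd w ++ [(b : ℕ)]) : ℝ) := by
          rw [Q_concat]; push_cast
          have : (b : ℝ) * Q (wd w) ≤ (QQ (wd w)).1 + (b : ℝ) * Q (wd w) := by
            have : (0:ℝ) ≤ (QQ (wd w)).1 := by positivity
            linarith
          refine le_trans ?_ this
          gcongr
        calc 1 / (c₂ * A₂ ^ (n + 1)) / (Q (wd w ++ [(b : ℕ)]) : ℝ) ^ 2
            ≤ 1 / (c₂ * A₂ ^ (n + 1)) / (c₁ * A₁ ^ (n + 1) * Q (wd w)) ^ 2 := by gcongr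
          _ = K / (A₁ ^ n * y) := by rw [hK, hy]; field_simp; rw [mul_pow]; ring
      · simp [hcb]
    refine (ENNReal.tsum_le_tsum hb).trans ?_
    rw [tsum_fintype, Finset.sum_const, Finset.card_univ, Fintype.card_fin, nsmul_eq_mul,
      ← ENNReal.ofReal_natCast, ← ENNReal.ofReal_mul (by positivity),
      ← ENNReal.ofReal_mul (by positivity)]
    apply ENNReal.ofReal_le_ofReal
    have hceil : (⌈2 * (c₁ * A₁ ^ (n + 1))⌉₊ : ℝ) ≤ (2 * c₁ * A₁ + 1) * A₁ ^ n := by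
      refine (Nat.ceil_lt_add_one (by positivity)).le.trans ?_
      rw [pow_succ]; nlinarith
    have e1 : (K / (A₁ ^ n * y)) ^ s = K ^ s * (A₁ ^ n) ^ (-s) * y ^ (-s) := by
      rw [div_eq_mul_inv, Real.mul_rpow hK0.le (by positivity),
        Real.inv_rpow (show 0 ≤ A₁ ^ n * y by positivity),
        ← Real.rpow_neg (show 0 ≤ A₁ ^ n * y by positivity), Real.mul_rpow (by positivity) hy0.le]
      ring
    have e2 : A₁ ^ ((1 - s0) * (n : ℝ)) = A₁ ^ n * (A₁ ^ n) ^ (-s0) := by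
      rw [← Real.rpow_natCast, ← Real.rpow_mul hA0.le, ← Real.rpow_add hA0]
      congr 1; ring
    have e3 : (A₁ ^ (-(s - s0))) ^ n = (A₁ ^ n) ^ (-(s - s0)) := by
      rw [← Real.rpow_natCast, ← Real.rpow_natCast, ← Real.rpow_mul hA0.le, ← Real.rpow_mul hA0.le,
        mul_comm]
    have i1 : (A₁ ^ n) ^ (-s) ≤ (A₁ ^ n) ^ (-s0) :=
      Real.rpow_le_rpow_of_exponent_le hAn (by linarith)
    have i2 : y ^ (-s) ≤ (A₁ ^ n) ^ (-(s - s0)) * y ^ (-s0) := by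
      rw [show -s = -(s - s0) + -s0 by ring, Real.rpow_add hy0]
      gcongr ?_ * _
      · exact Real.rpow_le_rpow_of_nonpos (by positivity) hyA (by linarith)
    rw [e1, e2, e3]
    calc (⌈2 * (c₁ * A₁ ^ (n + 1))⌉₊ : ℝ) * (K ^ s * (A₁ ^ n) ^ (-s) * y ^ (-s))
        ≤ ((2 * c₁ * A₁ + 1) * A₁ ^ n) * (K ^ s * (A₁ ^ n) ^ (-s0) *
          ((A₁ ^ n) ^ (-(s - s0)) * y ^ (-s0))) := by gcongr
      _ = _ := by ring

lemma upper {A₁ A₂ c₁ c₂ : ℝ} (hA₁ : 1 < A₁) (hA₂ : 1 < A₂) (hc₁ : 0 < c₁) (hc₂ : 0 < c₂) :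
    dimH (EE A₁ A₂ c₁ c₂) ≤ ENNReal.ofReal (min (sExp A₁) (gExp (A₁ * A₂) A₁)) := by
  have h : ∀ s, min (sExp A₁) (gExp (A₁ * A₂) A₁) < s →
      dimH (EE A₁ A₂ c₁ c₂) ≤ ENNReal.ofReal s := by
    intro s hs
    rcases min_lt_iff.1 hs with h | h
    · exact upper_s hA₁ hc₁ h
    · exact upper_g hA₁ hA₂ hc₁ hc₂ h
  have ht : Tendsto (fun s => ENNReal.ofReal s)
      (nhdsWithin (min (sExp A₁) (gExp (A₁ * A₂) A₁)) (Ioi (min (sExp A₁) (gExp (A₁ * A₂) A₁))))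
      (nhds (ENNReal.ofReal (min (sExp A₁) (gExp (A₁ * A₂) A₁)))) :=
    (ENNReal.continuous_ofReal.tendsto _).mono_left nhdsWithin_le_nhds
  refine ge_of_tendsto ht ?_
  filter_upwards [self_mem_nhdsWithin] with s hs using h s hs

end HLS

namespace HLS

instance instMSList : MeasurableSpace (List ℕ) := ⊤

instance instDMSList : DiscreteMeasurableSpace (List ℕ) := ⟨fun _ => trivial⟩

lemma mass_dist (F : ℕ → Finset (List ℕ)) (p : ℕ → List ℕ → ℝ) (hp0 : ∀ k w, 0 ≤ p k w)
    (hp1 : ∀ k, ∑ w ∈ F k, p k w = 1) (X : (ℕ → List ℕ) → ℝ) (hX : Measurable X)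
    {s C : ℝ} (hs : 0 < s) (hC : 0 < C)
    (h : ∀ ω : ℕ → List ℕ, (∀ k, ω k ∈ F k) → ∀ k, ∀ D ⊆ F k, D.Nontrivial →
      ∃ w ∈ D, ∃ w' ∈ D, ∀ ω1 ω2 : ℕ → List ℕ, (∀ k, ω1 k ∈ F k) → (∀ k, ω2 k ∈ F k) →
        (∀ i < k, ω1 i = ω i) → (∀ i < k, ω2 i = ω i) → ω1 k = w → ω2 k = w' →
        (∏ i ∈ Finset.range k, p i (ω i)) * ∑ v ∈ D, p k v ≤ C * |X ω1 - X ω2| ^ s)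
    (h0 : ∀ ω : ℕ → List ℕ, (∀ k, ω k ∈ F k) →
      Tendsto (fun k => ∏ i ∈ Finset.range k, p i (ω i)) atTop (nhds 0)) :
    ENNReal.ofReal s ≤ dimH (X '' {ω | ∀ k, ω k ∈ F k}) := by
  classical
  let ν : ℕ → Measure (List ℕ) := fun k =>
    ∑ w ∈ F k, ENNReal.ofReal (p k w) • Measure.dirac w
  have hνD : ∀ k (D : Set (List ℕ)), ν k D
      = ENNReal.ofReal (∑ w ∈ (F k).filter (· ∈ D), p k w) := by
    intro k D
    simp only [ν, Measure.finsetSum_apply, Measure.smul_apply, smul_eq_mul,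
      Measure.dirac_apply' _ (MeasurableSet.of_discrete (s := D)), Set.indicator_apply]
    rw [ENNReal.ofReal_sum_of_nonneg (fun w _ => hp0 k w), Finset.sum_filter]
    refine Finset.sum_congr rfl fun w _ => ?_
    split_ifs <;> simp
  have hprob : ∀ k, IsProbabilityMeasure (ν k) := fun k => ⟨by rw [hνD]; simp [hp1]⟩
  have hνs : ∀ k, ∀ w ∈ F k, ν k {w} = ENNReal.ofReal (p k w) := by
    intro k w hw
    rw [hνD]
    congr 1
    rw [Finset.sum_filter]
    simp [hw]
  have hνF : ∀ k, ν k {w | w ∉ F k} = 0 := by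
    intro k
    rw [hνD, Finset.sum_filter, Finset.sum_eq_zero]
    · simp
    · intro w hw
      rw [if_neg (fun hh => hh hw)]
  let μ : Measure (ℕ → List ℕ) := Measure.infinitePi ν
  have hGood : μ {ω | ∀ k, ω k ∈ F k}ᶜ = 0 := by
    have : ∀ᵐ ω ∂μ, ∀ k, ω k ∈ F k := by
      rw [ae_all_iff]
      intro k
      have := Measure.infinitePi_pi ν (s := {k}) (t := fun _ => {w | w ∉ F k})
        (fun _ _ => MeasurableSet.of_discrete)
      simp only [Finset.prod_singleton, hνF] at this
      rw [ae_iff, ← this]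
      congr 1
      ext ω; simp
    exact this
  have hcyl : ∀ (k : ℕ) (ω : ℕ → List ℕ) (D : Set (List ℕ)), (∀ k, ω k ∈ F k) →
      μ {ω' | (∀ i < k, ω' i = ω i) ∧ ω' k ∈ D}
        = ENNReal.ofReal (∏ i ∈ Finset.range k, p i (ω i)) * ν k D := by
    intro k ω D hω
    have := Measure.infinitePi_pi ν (s := Finset.range (k + 1))
      (t := fun i => if i < k then {ω i} else D) (fun _ _ => MeasurableSet.of_discrete)
    rw [Finset.prod_range_succ] at this
    rw [ENNReal.ofReal_prod_of_nonneg (fun i _ => hp0 _ _)]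
    have e : ∏ i ∈ Finset.range k, ν i (if i < k then {ω i} else D)
        = ∏ i ∈ Finset.range k, ENNReal.ofReal (p i (ω i)) := by
      refine Finset.prod_congr rfl fun i hi => ?_
      rw [if_pos (Finset.mem_range.1 hi), hνs i _ (hω i)]
    rw [e, if_neg (lt_irrefl k)] at this
    rw [← this]
    congr 1
    ext ω'
    simp only [mem_ofPred_eq, Set.mem_pi, Finset.coe_range, mem_Iio, Nat.lt_succ_iff]
    constructor
    · rintro ⟨h1, h2⟩ i hi
      rcases lt_or_eq_of_le hi with h | rfl
      · simp [h, h1 i h]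
      · simpa using h2
    · intro h1
      refine ⟨fun i hi => ?_, ?_⟩
      · simpa [hi] using h1 i hi.le
      · simpa using h1 k le_rfl
  have key : ∀ U : Set ℝ, μ (X ⁻¹' U) ≤ ENNReal.ofReal C * Metric.ediam U ^ s := by
    intro U
    let S : Set (ℕ → List ℕ) := X ⁻¹' U ∩ {ω | ∀ k, ω k ∈ F k}
    have hS : μ (X ⁻¹' U) ≤ μ S := by
      calc μ (X ⁻¹' U) ≤ μ (S ∪ {ω | ∀ k, ω k ∈ F k}ᶜ) := by
            refine measure_mono fun ω hω => ?_
            by_cases hg : ∀ k, ω k ∈ F k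
            · exact Or.inl ⟨hω, hg⟩
            · exact Or.inr hg
        _ ≤ μ S + μ {ω | ∀ k, ω k ∈ F k}ᶜ := measure_union_le _ _
        _ = μ S := by rw [hGood, add_zero]
    refine hS.trans ?_
    by_cases hsub : S.Subsingleton
    · rcases hsub.eq_empty_or_singleton with he | ⟨ω, he⟩
      · rw [he]; simp
      · have hω : ω ∈ S := by rw [he]; rfl
        have hz : μ S = 0 := by
          have ht := (ENNReal.continuous_ofReal.tendsto 0).comp (h0 ω hω.2)
          rw [ENNReal.ofReal_zero] at ht
          refine le_antisymm (ge_of_tendsto ht (Eventually.of_forall fun k => ?_)) zero_le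
          have := hcyl k ω univ hω.2
          simp only [Function.comp]
          have h1 : ν k univ = 1 := measure_univ
          rw [h1, mul_one] at this
          rw [← this, he]
          refine measure_mono ?_
          rintro _ rfl
          simp
        rw [hz]; exact zero_le
    · have hex : ∃ k, ∃ ω ∈ S, ∃ ω' ∈ S, ω k ≠ ω' k := by
        by_contra hcon
        push Not at hcon
        exact hsub fun a ha b hb => funext fun k => hcon k a ha b hb
      let k := Nat.find hex
      obtain ⟨ω, hω, ω', hω', hne⟩ : ∃ ω ∈ S, ∃ ω' ∈ S, ω k ≠ ω' k := Nat.find_spec hex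
      have hag : ∀ a ∈ S, ∀ i < k, a i = ω i := by
        intro a ha i hi
        have := Nat.find_min hex hi
        push Not at this
        exact this a ha ω hω
      let D : Finset (List ℕ) := (F k).filter fun w => ∃ a ∈ S, a k = w
      have hDn : D.Nontrivial := by
        refine ⟨ω k, ?_, ω' k, ?_, hne⟩
        · simp only [D, Finset.coe_filter]; exact ⟨hω.2 k, ω, hω, rfl⟩
        · simp only [D, Finset.coe_filter]; exact ⟨hω'.2 k, ω', hω', rfl⟩
      obtain ⟨w, hw, w', hw', hh⟩ := h ω hω.2 k D (Finset.filter_subset _ _) hDn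
      obtain ⟨-, a, ha, hak⟩ := Finset.mem_filter.1 hw
      obtain ⟨-, b, hb, hbk⟩ := Finset.mem_filter.1 hw'
      have h1 := hh a b ha.2 hb.2 (hag a ha) (hag b hb) hak hbk
      calc μ S ≤ μ {ω' | (∀ i < k, ω' i = ω i) ∧ ω' k ∈ (D : Set (List ℕ))} := by
            refine measure_mono fun c hc => ⟨hag c hc, ?_⟩
            simp only [D, Finset.coe_filter]
            exact ⟨hc.2 k, c, hc, rfl⟩
        _ = ENNReal.ofReal ((∏ i ∈ Finset.range k, p i (ω i)) * ∑ v ∈ D, p k v) := by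
            rw [hcyl k ω _ hω.2, hνD, ENNReal.ofReal_mul (Finset.prod_nonneg fun i _ => hp0 _ _)]
            congr 3
            ext v; simp [D]
        _ ≤ ENNReal.ofReal (C * |X a - X b| ^ s) := ENNReal.ofReal_le_ofReal h1
        _ = ENNReal.ofReal C * edist (X a) (X b) ^ s := by
            rw [ENNReal.ofReal_mul hC.le, ← ENNReal.ofReal_rpow_of_nonneg (abs_nonneg _) hs.le,
              edist_dist, Real.dist_eq]
        _ ≤ _ := by
            gcongr
            exact Metric.edist_le_ediam_of_mem ha.1 hb.1
  have hC0 : ENNReal.ofReal C ≠ 0 := by simpa using hC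
  have hle : (ENNReal.ofReal C)⁻¹ • μ.map X ≤ μH[s] := by
    refine Measure.le_hausdorffMeasure s _ 1 one_pos fun U _ => ?_
    rw [Measure.smul_apply, smul_eq_mul]
    calc (ENNReal.ofReal C)⁻¹ * μ.map X U ≤ (ENNReal.ofReal C)⁻¹ * μ.map X (closure U) := by
          gcongr; exact subset_closure
      _ = (ENNReal.ofReal C)⁻¹ * μ (X ⁻¹' closure U) := by
          rw [Measure.map_apply hX isClosed_closure.measurableSet]
      _ ≤ (ENNReal.ofReal C)⁻¹ * (ENNReal.ofReal C * Metric.ediam (closure U) ^ s) := by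
          gcongr; exact key _
      _ = _ := by
          rw [← mul_assoc, ENNReal.inv_mul_cancel hC0 ENNReal.ofReal_ne_top, one_mul,
            Metric.ediam_closure]
  have hpos : μH[s] (X '' {ω | ∀ k, ω k ∈ F k}) ≠ 0 := by
    have h1 : 1 ≤ μ.map X (X '' {ω | ∀ k, ω k ∈ F k}) := by
      calc (1 : ENNReal) = μ univ := measure_univ.symm
        _ ≤ μ ({ω | ∀ k, ω k ∈ F k} ∪ {ω | ∀ k, ω k ∈ F k}ᶜ) := by rw [union_compl_self]
        _ ≤ μ {ω | ∀ k, ω k ∈ F k} + μ {ω | ∀ k, ω k ∈ F k}ᶜ := measure_union_le _ _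
        _ = μ {ω | ∀ k, ω k ∈ F k} := by rw [hGood, add_zero]
        _ ≤ μ (X ⁻¹' (X '' {ω | ∀ k, ω k ∈ F k})) := measure_mono (subset_preimage_image _ _)
        _ ≤ _ := Measure.le_map_apply hX.aemeasurable _
    have h2 := hle (X '' {ω | ∀ k, ω k ∈ F k})
    rw [Measure.smul_apply, smul_eq_mul] at h2
    intro h3
    rw [h3] at h2
    have h4 := le_antisymm h2 zero_le
    rcases mul_eq_zero.1 h4 with h5 | h5
    · simp at h5
    · rw [h5] at h1; simp at h1
  have := le_dimH_of_hausdorffMeasure_ne_zero (X := ℝ) (d := s.toNNReal)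
    (s := X '' {ω | ∀ k, ω k ∈ F k}) (by rwa [Real.coe_toNNReal _ hs.le])
  exact this

/-! ### the coding map -/

def pre (ω : ℕ → List ℕ) : ℕ → List ℕ
  | 0 => []
  | k + 1 => pre ω k ++ ω k

def shf (k : ℕ) (ω : ℕ → List ℕ) : ℕ → List ℕ := fun i => ω (k + i)

noncomputable def XX (ω : ℕ → List ℕ) : ℝ := limsup (fun n => phi (pre ω n) 0) atTop

def Gd (ω : ℕ → List ℕ) : Prop := ∀ k, Pos (ω k) ∧ ω k ≠ []

lemma Gd.shf {ω : ℕ → List ℕ} (h : Gd ω) (k : ℕ) : Gd (shf k ω) := fun i => h (k + i)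

lemma pre_pos {ω : ℕ → List ℕ} (h : Gd ω) (k : ℕ) : Pos (pre ω k) := by
  induction k with
  | zero => simp [pre, Pos]
  | succ k ih => exact ih.append (h k).1

lemma pre_len {ω : ℕ → List ℕ} (h : Gd ω) (k : ℕ) : k ≤ (pre ω k).length := by
  induction k with
  | zero => simp
  | succ k ih =>
    have := List.length_pos_iff.2 (h k).2
    simp only [pre, List.length_append]; omega

lemma pre_add (ω : ℕ → List ℕ) (k j : ℕ) : pre ω (k + j) = pre ω k ++ pre (shf k ω) j := by
  induction j with
  | zero => simp [pre]
  | succ j ih => rw [← add_assoc, pre, ih, pre, shf, List.append_assoc]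

lemma pre_congr {ω ω' : ℕ → List ℕ} {k : ℕ} (h : ∀ i < k, ω i = ω' i) : pre ω k = pre ω' k := by
  induction k with
  | zero => rfl
  | succ k ih => rw [pre, pre, ih (fun i hi => h i (by omega)), h k (by omega)]

lemma measurable_pre (k : ℕ) : Measurable (fun ω : ℕ → List ℕ => pre ω k) := by
  induction k with
  | zero => exact measurable_const
  | succ k ih =>
    have h1 : Measurable (fun q : List ℕ × List ℕ => q.1 ++ q.2) := Measurable.of_discrete
    exact h1.comp (ih.prodMk (measurable_pi_apply k))

lemma measurable_XX : Measurable XX := by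
  refine Measurable.limsup fun n => ?_
  have h1 : Measurable (fun w : List ℕ => phi w 0) := Measurable.of_discrete
  exact h1.comp (measurable_pre n)

lemma k_le_Q {ω : ℕ → List ℕ} (h : Gd ω) (k : ℕ) : (k : ℝ) ≤ Q (pre ω k) := by
  exact_mod_cast (pre_len h k).trans (Q_facts _ (pre_pos h k)).2.2.1

lemma tendsto_XX {ω : ℕ → List ℕ} (h : Gd ω) :
    Tendsto (fun n => phi (pre ω n) 0) atTop (nhds (XX ω)) := by
  have hc : CauchySeq (fun n => phi (pre ω (n + 1)) 0) := by
    refine cauchySeq_of_le_tendsto_0' (fun n : ℕ => 1 / ((n : ℝ) + 1)) ?_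
      tendsto_one_div_add_atTop_nhds_zero_nat
    intro n m hnm
    obtain ⟨j, rfl⟩ := Nat.exists_eq_add_of_le hnm
    rw [show n + j + 1 = (n + 1) + j by ring, pre_add ω (n + 1) j, phi_append, Real.dist_eq]
    have hp := pre_pos (h.shf (n + 1)) j
    have h0 := phi_nonneg (w := pre (shf (n + 1) ω) j) (t := 0) le_rfl
    have h1 := phi_le_one hp le_rfl zero_le_one
    refine (phi_sub_le (pre_pos h _) le_rfl h0).trans ?_
    have hk := k_le_Q h (n + 1)
    push_cast at hk
    have : (n : ℝ) + 1 ≤ (Q (pre ω (n + 1)) : ℝ) ^ 2 := by nlinarith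
    gcongr
    rw [zero_sub, abs_neg, abs_of_nonneg h0]; exact h1
  obtain ⟨x, hx⟩ := cauchySeq_tendsto_of_complete hc
  have hx' := (tendsto_add_atTop_iff_nat (f := fun n => phi (pre ω n) 0) 1).1 hx
  have : XX ω = x := hx'.limsup_eq
  rwa [this]

lemma XX_mem {ω : ℕ → List ℕ} (h : Gd ω) : XX ω ∈ Icc (0 : ℝ) 1 := by
  constructor
  · exact ge_of_tendsto' (tendsto_XX h) fun n => phi_nonneg le_rfl
  · exact le_of_tendsto' (tendsto_XX h) fun n => phi_le_one (pre_pos h n) le_rfl zero_le_one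

lemma XX_shf {ω : ℕ → List ℕ} (h : Gd ω) (k : ℕ) :
    XX ω = phi (pre ω k) (XX (shf k ω)) := by
  have h1 := (tendsto_add_atTop_iff_nat (f := fun n => phi (pre ω n) 0) k).2 (tendsto_XX h)
  refine tendsto_nhds_unique h1 ?_
  have h2 := tendsto_XX (h.shf k)
  rw [tendsto_iff_dist_tendsto_zero] at h2 ⊢
  refine squeeze_zero (fun _ => dist_nonneg) (fun n => ?_) h2
  rw [add_comm n k, pre_add ω k n, phi_append, Real.dist_eq, Real.dist_eq]
  refine (phi_sub_le (pre_pos h k) (phi_nonneg le_rfl) (XX_mem (h.shf k)).1).trans ?_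
  exact div_le_self (abs_nonneg _) (one_le_pow₀ (one_le_Q (pre_pos h k)))

lemma phi_pos {w : List ℕ} {t : ℝ} (ht : 0 < t) : 0 < phi w t := by
  induction w with
  | nil => simpa [phi]
  | cons a w ih => simp only [phi]; positivity

lemma XX_step {ω : ℕ → List ℕ} (h : Gd ω) : XX ω = phi (ω 0) (XX (shf 1 ω)) := by
  have := XX_shf h 1
  simpa [pre] using this

lemma XX_pos {ω : ℕ → List ℕ} (h : Gd ω) : 0 < XX ω := by
  rw [XX_step h]
  have h0 := (XX_mem (h.shf 1)).1
  obtain ⟨h1, h2⟩ := h 0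
  cases hw : ω 0 with
  | nil => exact absurd hw h2
  | cons a w =>
    rw [hw] at h1
    have h3 : (1 : ℝ) ≤ a := by exact_mod_cast h1.cons.1
    have := phi_nonneg (w := w) h0
    simp only [phi]; positivity

lemma XX_lt_one {ω : ℕ → List ℕ} (h : Gd ω) : XX ω < 1 := by
  rw [XX_step h]
  have h0 := XX_pos (h.shf 1)
  obtain ⟨h1, h2⟩ := h 0
  cases hw : ω 0 with
  | nil => exact absurd hw h2
  | cons a w =>
    rw [hw] at h1
    have h3 : (1 : ℝ) ≤ a := by exact_mod_cast h1.cons.1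
    have := phi_pos (w := w) h0
    simp only [phi]
    rw [div_lt_one (by linarith)]; linarith

/-- the digits of `XX ω` inside the `k`-th piece when it is a singleton. -/
lemma pq_XX {ω : ℕ → List ℕ} (h : Gd ω) {k a : ℕ} (ha : ω k = [a]) :
    pq (XX ω) ((pre ω k).length + 1) = a := by
  have := XX_shf h (k + 1)
  rw [pre, ha] at this
  rw [this]
  refine pq_phi ?_ (XX_pos (h.shf _)) (XX_lt_one (h.shf _))
  have := pre_pos h (k + 1)
  rwa [pre, ha] at this

end HLS

namespace HLS

lemma wd_inj {n : ℕ} : Function.Injective (wd : (Fin n → ℕ+) → List ℕ) := by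
  intro a b h
  have := List.ofFn_injective h
  funext i
  exact PNat.eq (congrFun this i)

lemma blocks_aux {s θ : ℝ} (hθ : 1 ≤ θ) {u : ℕ → ENNReal}
    (hu : ∀ n, u n = ∑' a : Fin n → ℕ+, ENNReal.ofReal ((θ ^ n)⁻¹ * (Q (wd a) : ℝ) ^ (-(2 * s))))
    (h : ¬ atTop.limsup (fun n : ℕ => (((n : ℝ)⁻¹ : ℝ) : EReal) * ENNReal.log (u n)) ≤ 0) :
    ∃ L M : ℕ, 1 ≤ L ∧ 1 ≤ M ∧ ∃ B : Finset (List ℕ),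
      (∀ b ∈ B, b.length = L ∧ ∀ a ∈ b, 1 ≤ a ∧ a ≤ M) ∧
      8 * θ ^ L ≤ ∑ b ∈ B, (Q b : ℝ) ^ (-(2 * s)) := by
  classical
  obtain ⟨δ, hδ, hf⟩ := press_pos h
  have he : ∀ᶠ n : ℕ in atTop, 8 ≤ Real.exp (δ * n) := by
    have : Tendsto (fun n : ℕ => Real.exp (δ * n)) atTop atTop :=
      Real.tendsto_exp_atTop.comp (tendsto_natCast_atTop_atTop.const_mul_atTop hδ)
    exact this.eventually_ge_atTop 8
  obtain ⟨L, h1, h2, h3⟩ := (hf.and_eventually (he.and (eventually_ge_atTop 1))).exists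
  rw [hu, ENNReal.tsum_eq_iSup_sum, lt_iSup_iff] at h1
  obtain ⟨t, ht⟩ := h1
  rw [← ENNReal.ofReal_sum_of_nonneg (fun _ _ => by positivity), ← Finset.mul_sum] at ht
  have ht2 := (ENNReal.ofReal_lt_ofReal_iff_of_nonneg (Real.exp_pos _).le).1 ht
  refine ⟨L, 1 + ∑ b ∈ t.image wd, b.sum, h3, by omega, t.image wd, ?_, ?_⟩
  · intro b hb
    obtain ⟨a, ha, rfl⟩ := Finset.mem_image.1 hb
    refine ⟨wd_length a, fun c hc => ⟨wd_pos a c hc, ?_⟩⟩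
    have h4 : c ≤ (wd a).sum := List.le_sum_of_mem hc
    have h5 := Finset.single_le_sum (f := fun b : List ℕ => b.sum) (fun _ _ => Nat.zero_le _) hb
    omega
  · rw [Finset.sum_image (fun _ _ _ _ h => wd_inj h)]
    have hp : 0 < θ ^ L := by positivity
    have h6 := h2.trans ht2.le
    rw [← div_eq_inv_mul, le_div_iff₀ hp] at h6
    exact h6

lemma blocks {A₁ A₂ s : ℝ} (hA₁ : 1 < A₁) (hA₂ : 1 < A₂) (hs : 0 < s)
    (h : s < min (sExp A₁) (gExp (A₁ * A₂) A₁)) :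
    ∃ L M : ℕ, 1 ≤ L ∧ 1 ≤ M ∧ ∃ B : Finset (List ℕ),
      (∀ b ∈ B, b.length = L ∧ ∀ a ∈ b, 1 ≤ a ∧ a ≤ M) ∧
      8 * (max (A₁ ^ s) (A₁ ^ (2 * s - 1) * A₂ ^ s)) ^ L ≤ ∑ b ∈ B, (Q b : ℝ) ^ (-(2 * s)) := by
  have hA0 : 0 < A₁ := by linarith
  have hA20 : 0 < A₂ := by linarith
  have h1 : s ∉ sSet A₁ := by
    rw [sExp_eq] at h
    exact notMem_of_lt_csInf (h.trans_le (min_le_left _ _)) ⟨0, fun s hs => hs.1⟩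
  have h2 : s ∉ gSet (A₁ * A₂) A₁ := by
    rw [gExp_eq] at h
    exact notMem_of_lt_csInf (h.trans_le (min_le_right _ _)) ⟨0, fun s hs => hs.1⟩
  have hθ : 1 ≤ max (A₁ ^ s) (A₁ ^ (2 * s - 1) * A₂ ^ s) :=
    (Real.one_le_rpow hA₁.le hs.le).trans (le_max_left _ _)
  have hq : ∀ n (a : Fin n → ℕ+), ((Q (wd a) : ℝ) ^ 2) ^ (-s) = (Q (wd a) : ℝ) ^ (-(2 * s)) := by
    intro n a
    rw [← Real.rpow_natCast, ← Real.rpow_mul (by positivity)]; congr 1; push_cast; ring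
  rcases max_choice (A₁ ^ s) (A₁ ^ (2 * s - 1) * A₂ ^ s) with hm | hm
  · refine blocks_aux hθ (fun n => ?_) (fun hh => h1 ⟨hs.le, hh⟩)
    refine tsum_congr fun a => ?_
    rw [Real.mul_rpow (by positivity) (by positivity), hq, hm]
    congr 2
    rw [← Real.rpow_natCast, ← Real.rpow_natCast, ← Real.rpow_mul hA0.le, ← Real.rpow_mul hA0.le,
      ← Real.rpow_neg hA0.le]
    congr 1; ring
  · refine blocks_aux hθ (fun n => ?_) (fun hh => h2 ⟨hs.le, hh⟩)
    refine tsum_congr fun a => ?_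
    rw [Real.mul_rpow (by positivity) (by positivity), hq, hm, ← mul_assoc]
    congr 2
    rw [mul_pow, mul_pow, Real.mul_rpow (by positivity) (by positivity),
      ← Real.rpow_natCast, ← Real.rpow_natCast, ← Real.rpow_natCast, ← Real.rpow_natCast,
      ← Real.rpow_mul hA0.le, ← Real.rpow_mul hA0.le, ← Real.rpow_mul hA20.le,
      ← Real.rpow_mul hA20.le, mul_inv, ← Real.rpow_neg hA0.le, ← Real.rpow_neg hA20.le,
      ← mul_assoc, ← Real.rpow_add hA0]
    congr 2 <;> ring

/-! ### gaps -/

lemma inv_gap {i j y y' D : ℝ} (hi : 1 ≤ i) (hj : 1 ≤ j) (hy : 0 ≤ y) (hy' : 0 ≤ y')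
    (hiD : i + y ≤ D) (hjD : j + y' ≤ D) :
    |(i + y) - (j + y')| / D ^ 2 ≤ |1 / (i + y) - 1 / (j + y')| := by
  have h1 : 0 < i + y := by linarith
  have h2 : 0 < j + y' := by linarith
  rw [div_sub_div _ _ h1.ne' h2.ne', abs_div, abs_of_pos (mul_pos h1 h2), one_mul, mul_one,
    abs_sub_comm, sq]
  gcongr
  linarith

lemma nat_gap {i j : ℕ} {y y' η : ℝ} (hij : i ≠ j) (hη : 0 < η) (hη1 : η ≤ 1)
    (hyy : |y - y'| ≤ 1 - η) :
    η * |(i : ℝ) - j| ≤ |((i : ℝ) + y) - (j + y')| := by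
  have h1 : (1 : ℝ) ≤ |(i : ℝ) - j| := by
    have : (1 : ℤ) ≤ |(i : ℤ) - j| := Int.one_le_abs (by omega)
    exact_mod_cast this
  have h2 : |(i : ℝ) - j| - |y' - y| ≤ |((i : ℝ) - j) - (y' - y)| := abs_sub_abs_le_abs_sub _ _
  rw [abs_sub_comm y' y] at h2
  rw [show ((i : ℝ) + y) - (j + y') = ((i : ℝ) - j) - (y' - y) by ring]
  nlinarith

lemma phi_ge {M : ℕ} {w : List ℕ} (hw : w ≠ []) (hM : ∀ a ∈ w, 1 ≤ a ∧ a ≤ M) {t : ℝ}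
    (h0 : 0 ≤ t) (h1 : t ≤ 1) : 1 / ((M : ℝ) + 1) ≤ phi w t := by
  cases w with
  | nil => exact absurd rfl hw
  | cons a w =>
    have ha := hM a (by simp)
    have h3 : (a : ℝ) ≤ M := by exact_mod_cast ha.2
    have h4 : (1 : ℝ) ≤ a := by exact_mod_cast ha.1
    have hw : Pos w := fun b hb => (hM b (by simp [hb])).1
    have h5 := phi_le_one hw h0 h1
    have h6 := phi_nonneg (w := w) h0
    simp only [phi]
    gcongr

lemma gap_list {M : ℕ} (w w' : List ℕ) (hl : w.length = w'.length) (hne : w ≠ w')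
    (hw : ∀ a ∈ w, 1 ≤ a ∧ a ≤ M) (hw' : ∀ a ∈ w', 1 ≤ a ∧ a ≤ M) {y y' : ℝ}
    (h0 : 0 ≤ y) (h1 : y ≤ 1) (h0' : 0 ≤ y') (h1' : y' ≤ 1)
    (hyy : |y - y'| ≤ 1 - 1 / ((M : ℝ) + 1)) :
    1 / ((M : ℝ) + 1) / (((M : ℝ) + 1) ^ 2) ^ w.length ≤ |phi w y - phi w' y'| := by
  induction w generalizing w' with
  | nil =>
    have : w' = [] := List.eq_nil_of_length_eq_zero (by simpa using hl.symm)
    exact absurd this.symm hne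
  | cons a v ih =>
    cases w' with
    | nil => simp at hl
    | cons a' v' =>
      have hv : ∀ b ∈ v, 1 ≤ b ∧ b ≤ M := fun b hb => hw b (by simp [hb])
      have hv' : ∀ b ∈ v', 1 ≤ b ∧ b ≤ M := fun b hb => hw' b (by simp [hb])
      have ha := hw a (by simp)
      have ha' := hw' a' (by simp)
      have e1 : (1 : ℝ) ≤ a := by exact_mod_cast ha.1
      have e2 : (a : ℝ) ≤ M := by exact_mod_cast ha.2
      have e1' : (1 : ℝ) ≤ a' := by exact_mod_cast ha'.1
      have e2' : (a' : ℝ) ≤ M := by exact_mod_cast ha'.2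
      have p0 := phi_nonneg (w := v) h0
      have p1 := phi_le_one (w := v) (fun b hb => (hv b hb).1) h0 h1
      have p0' := phi_nonneg (w := v') h0'
      have p1' := phi_le_one (w := v') (fun b hb => (hv' b hb).1) h0' h1'
      have hvl : v.length = v'.length := by simpa using hl
      simp only [phi]
      refine le_trans ?_ (inv_gap e1 e1' p0 p0' (D := (M : ℝ) + 1) (by linarith) (by linarith))
      have hD : (1 : ℝ) ≤ ((M : ℝ) + 1) ^ 2 := one_le_pow₀ (by linarith [Nat.cast_nonneg (α := ℝ) M])
      rw [List.length_cons, pow_succ, ← div_div]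
      gcongr
      by_cases hae : a = a'
      · subst hae
        have := ih v' hvl (fun h => hne (by rw [h])) hv hv'
        rwa [add_sub_add_left_eq_sub]
      · have hη : (0 : ℝ) < 1 / ((M : ℝ) + 1) := by positivity
        have hη1 : 1 / ((M : ℝ) + 1) ≤ 1 := by
          rw [div_le_one (by positivity)]; linarith [Nat.cast_nonneg (α := ℝ) M]
        have hp : |phi v y - phi v' y'| ≤ 1 - 1 / ((M : ℝ) + 1) := by
          by_cases hvn : v = []
          · subst hvn
            have : v' = [] := List.eq_nil_of_length_eq_zero (by simpa using hvl.symm)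
            subst this
            simpa [phi] using hyy
          · have hvn' : v' ≠ [] := fun hh => hvn (List.eq_nil_of_length_eq_zero (by simp [hvl, hh]))
            have g1 := phi_ge hvn hv h0 h1
            have g2 := phi_ge hvn' hv' h0' h1'
            rw [abs_le]; constructor <;> linarith
        have := nat_gap hae hη hη1 hp
        have h1 : (1 : ℝ) ≤ |(a : ℝ) - a'| := by
          have : (1 : ℤ) ≤ |(a : ℤ) - a'| := Int.one_le_abs (by omega)
          exact_mod_cast this
        calc 1 / ((M : ℝ) + 1) / (((M : ℝ) + 1) ^ 2) ^ v.length ≤ 1 / ((M : ℝ) + 1) :=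
              div_le_self hη.le (one_le_pow₀ hD)
          _ ≤ 1 / ((M : ℝ) + 1) * |(a : ℝ) - a'| := le_mul_of_one_le_right hη.le h1
          _ ≤ _ := this

end HLS

namespace HLS

/-- Data of the Cantor type construction: blocks `B` and special pieces. -/
structure Cfg where
  s : ℝ
  hs : 0 < s
  hs1 : s ≤ 1
  B : Finset (List ℕ)
  L : ℕ
  M : ℕ
  hL : 1 ≤ L
  hM : 1 ≤ M
  hB : ∀ b ∈ B, b.length = L ∧ ∀ a ∈ b, 1 ≤ a ∧ a ≤ M
  hZ : 0 < ∑ b ∈ B, (Q b : ℝ) ^ (-(2 * s))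
  sp : ℕ → Bool
  ρ : ℕ → ℝ
  hρ : ∀ k, sp k = true → 2 ≤ ρ k

noncomputable def dig (R : ℝ) : Finset (List ℕ) := (Finset.Ico ⌈R⌉₊ ⌈2 * R⌉₊).image fun a => [a]

lemma mem_dig {R : ℝ} {w : List ℕ} : w ∈ dig R ↔ ∃ a : ℕ, w = [a] ∧ R ≤ a ∧ (a : ℝ) < 2 * R := by
  simp only [dig, Finset.mem_image, Finset.mem_Ico, Nat.ceil_le, Nat.lt_ceil]
  constructor
  · rintro ⟨a, h, rfl⟩; exact ⟨a, rfl, h⟩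
  · rintro ⟨a, rfl, h⟩; exact ⟨a, h, rfl⟩

lemma card_dig {R : ℝ} (hR : 2 ≤ R) : R / 2 ≤ ((dig R).card : ℝ) := by
  rw [dig, Finset.card_image_of_injective _ (fun a b h => by simpa using h), Nat.card_Ico]
  have h1 := Nat.ceil_lt_add_one (a := R) (by linarith)
  have h2 := Nat.le_ceil (2 * R)
  have h3 : (⌈2 * R⌉₊ : ℝ) ≤ ((⌈2 * R⌉₊ - ⌈R⌉₊ : ℕ) : ℝ) + ⌈R⌉₊ := by
    exact_mod_cast (by omega : ⌈2 * R⌉₊ ≤ (⌈2 * R⌉₊ - ⌈R⌉₊) + ⌈R⌉₊)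
  linarith

namespace Cfg

variable (c : Cfg)

noncomputable def Z : ℝ := ∑ b ∈ c.B, (Q b : ℝ) ^ (-(2 * c.s))

noncomputable def F (k : ℕ) : Finset (List ℕ) := bif c.sp k then dig (c.ρ k) else c.B

noncomputable def p (k : ℕ) (w : List ℕ) : ℝ :=
  bif c.sp k then 1 / ((dig (c.ρ k)).card : ℝ) else (Q w : ℝ) ^ (-(2 * c.s)) / c.Z

noncomputable def P (ω : ℕ → List ℕ) (k : ℕ) : ℝ := ∏ i ∈ Finset.range k, c.p i (ω i)

noncomputable def V (ω : ℕ → List ℕ) (k : ℕ) : ℝ := c.P ω k * (Q (pre ω k) : ℝ) ^ (2 * c.s)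

def Good (ω : ℕ → List ℕ) : Prop := ∀ k, ω k ∈ c.F k

variable {c}

lemma Z_pos : 0 < c.Z := c.hZ

lemma p_nonneg (k : ℕ) (w : List ℕ) : 0 ≤ c.p k w := by
  have := c.Z_pos
  unfold p; cases c.sp k <;> simp only [cond_true, cond_false] <;> positivity

lemma P_nonneg (ω : ℕ → List ℕ) (k : ℕ) : 0 ≤ c.P ω k :=
  Finset.prod_nonneg fun _ _ => p_nonneg _ _

lemma V_nonneg (ω : ℕ → List ℕ) (k : ℕ) : 0 ≤ c.V ω k :=
  mul_nonneg (P_nonneg _ _) (by positivity)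

lemma card_pos {k : ℕ} (hk : c.sp k = true) : (0 : ℝ) < (dig (c.ρ k)).card := by
  have := card_dig (c.hρ k hk); linarith [c.hρ k hk]

lemma p_sum (k : ℕ) : ∑ w ∈ c.F k, c.p k w = 1 := by
  unfold p F
  cases hk : c.sp k
  · simp only [cond_false]
    rw [← Finset.sum_div]
    exact div_self c.Z_pos.ne'
  · have := card_pos hk
    simp only [cond_true, Finset.sum_const, nsmul_eq_mul]
    field_simp

lemma F_sp {k : ℕ} (hk : c.sp k = true) {w : List ℕ} (hw : w ∈ c.F k) :
    ∃ a : ℕ, w = [a] ∧ c.ρ k ≤ a ∧ (a : ℝ) < 2 * c.ρ k := by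
  rw [F, hk, cond_true] at hw
  exact mem_dig.1 hw

lemma F_bl {k : ℕ} (hk : c.sp k = false) {w : List ℕ} (hw : w ∈ c.F k) : w ∈ c.B := by
  rwa [F, hk, cond_false] at hw

lemma F_ok {k : ℕ} {w : List ℕ} (hw : w ∈ c.F k) : Pos w ∧ w ≠ [] := by
  cases hk : c.sp k
  · obtain ⟨h1, h2⟩ := c.hB w (F_bl hk hw)
    refine ⟨fun a ha => (h2 a ha).1, ?_⟩
    rintro rfl
    have := c.hL
    simp at h1; omega
  · obtain ⟨a, rfl, h1, h2⟩ := F_sp hk hw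
    have := c.hρ k hk
    refine ⟨?_, by simp⟩
    intro b hb
    have : b = a := by simpa using hb
    subst this
    have : (1 : ℝ) ≤ b := by linarith
    exact_mod_cast this

lemma Good.gd {ω : ℕ → List ℕ} (h : c.Good ω) : Gd ω := fun k => F_ok (h k)

lemma P_eq {ω : ℕ → List ℕ} (h : c.Good ω) (k : ℕ) :
    c.P ω k = c.V ω k * (Q (pre ω k) : ℝ) ^ (-(2 * c.s)) := by
  have := one_le_Q (pre_pos h.gd k)
  rw [V, mul_assoc, ← Real.rpow_add (by linarith)]
  simp

lemma V_bl {ω : ℕ → List ℕ} (h : c.Good ω) {k : ℕ} (hk : c.sp k = false) :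
    c.V ω (k + 1) ≤ c.V ω k * (4 / c.Z) := by
  have hz := c.Z_pos
  have hs := c.hs
  have h1 := one_le_Q (pre_pos h.gd k)
  have h2 := one_le_Q (h.gd k).1
  have h3 := Q_append_le (pre_pos h.gd k) (h.gd k).1
  have h4 := P_nonneg (c := c) ω k
  calc c.V ω (k + 1) = c.P ω k * ((Q (ω k) : ℝ) ^ (-(2 * c.s)) / c.Z)
        * (Q (pre ω k ++ ω k) : ℝ) ^ (2 * c.s) := by
        rw [V, P, Finset.prod_range_succ, ← P]
        simp only [p, hk, cond_false, pre]
    _ ≤ c.P ω k * ((Q (ω k) : ℝ) ^ (-(2 * c.s)) / c.Z)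
        * (2 * Q (pre ω k) * Q (ω k) : ℝ) ^ (2 * c.s) := by gcongr
    _ = c.P ω k * (Q (pre ω k) : ℝ) ^ (2 * c.s) * ((2 : ℝ) ^ (2 * c.s) / c.Z)
          * ((Q (ω k) : ℝ) ^ (-(2 * c.s)) * (Q (ω k) : ℝ) ^ (2 * c.s)) := by
        rw [Real.mul_rpow (by positivity) (by positivity),
          Real.mul_rpow (by positivity) (by positivity)]
        ring
    _ = c.V ω k * ((2 : ℝ) ^ (2 * c.s) / c.Z) := by
        rw [← Real.rpow_add (by linarith), V]; simp
    _ ≤ _ := by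
        have := V_nonneg (c := c) ω k
        gcongr
        calc (2 : ℝ) ^ (2 * c.s) ≤ (2 : ℝ) ^ (2 : ℝ) :=
              Real.rpow_le_rpow_of_exponent_le (by norm_num) (by linarith [c.hs1])
          _ = 4 := by norm_num

lemma V_sp {ω : ℕ → List ℕ} (h : c.Good ω) {k : ℕ} (hk : c.sp k = true) :
    c.V ω (k + 1) ≤ c.V ω k * (32 * (c.ρ k) ^ (2 * c.s - 1)) := by
  have hs := c.hs
  have h1 := one_le_Q (pre_pos h.gd k)
  have hρ := c.hρ k hk
  obtain ⟨a, ha, ha1, ha2⟩ := F_sp hk (h k)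
  have hN := card_dig hρ
  have hQa : Q [a] = a := by simp [Q, QQ, stp]
  have h3 := Q_append_le (pre_pos h.gd k) (h.gd k).1
  rw [ha, hQa] at h3
  have h4 := P_nonneg (c := c) ω k
  have h5 := V_nonneg (c := c) ω k
  calc c.V ω (k + 1) = c.P ω k * (1 / ((dig (c.ρ k)).card : ℝ))
        * (Q (pre ω k ++ [a]) : ℝ) ^ (2 * c.s) := by
        rw [V, P, Finset.prod_range_succ, ← P]
        simp only [p, hk, cond_true, pre, ha]
    _ ≤ c.P ω k * (1 / (c.ρ k / 2)) * (2 * Q (pre ω k) * (2 * c.ρ k) : ℝ) ^ (2 * c.s) := by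
        gcongr
        refine h3.trans ?_
        gcongr
    _ = c.P ω k * (Q (pre ω k) : ℝ) ^ (2 * c.s) * (2 * (4 : ℝ) ^ (2 * c.s))
          * ((c.ρ k) ^ (2 * c.s) / c.ρ k) := by
        rw [show (2 * Q (pre ω k) * (2 * c.ρ k) : ℝ) = 4 * Q (pre ω k) * c.ρ k by ring,
          Real.mul_rpow (by positivity) (by positivity),
          Real.mul_rpow (by positivity) (by positivity)]
        field_simp
    _ = c.V ω k * (2 * (4 : ℝ) ^ (2 * c.s) * (c.ρ k) ^ (2 * c.s - 1)) := by
        rw [Real.rpow_sub_one (by linarith), V]; ring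
    _ ≤ _ := by
        gcongr
        calc 2 * (4 : ℝ) ^ (2 * c.s) ≤ 2 * (4 : ℝ) ^ (2 : ℝ) := by
              gcongr
              · norm_num
              · linarith [c.hs1]
          _ = 32 := by norm_num

/-- the tails after a piece are uniformly not too far apart. -/
lemma tails {ω ω' : ℕ → List ℕ} (h : c.Good ω) (h' : c.Good ω') (k : ℕ) :
    |XX (shf k ω) - XX (shf k ω')| ≤ 1 - 1 / ((c.M : ℝ) + 1) := by
  have hM : (1 : ℝ) ≤ c.M := by exact_mod_cast c.hM
  have hη : 1 / ((c.M : ℝ) + 1) ≤ 1 / 2 := by gcongr; linarith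
  have key : ∀ ω, c.Good ω → (c.sp k = true → 0 ≤ XX (shf k ω) ∧ XX (shf k ω) ≤ 1 / 2) ∧
      (c.sp k = false → 1 / ((c.M : ℝ) + 1) ≤ XX (shf k ω) ∧ XX (shf k ω) ≤ 1) := by
    intro ω h
    have h1 := XX_mem (h.gd.shf k)
    have h2 := XX_mem ((h.gd.shf k).shf 1)
    have h3 := XX_step (h.gd.shf k)
    have h4 : shf k ω 0 = ω k := by simp [shf]
    rw [h4] at h3
    refine ⟨fun hk => ⟨h1.1, ?_⟩, fun hk => ⟨?_, h1.2⟩⟩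
    · obtain ⟨a, ha, ha1, ha2⟩ := F_sp hk (h k)
      rw [h3, ha]
      simp only [phi]
      have := c.hρ k hk
      gcongr
      linarith [h2.1]
    · rw [h3]
      exact phi_ge (h.gd k).2 (c.hB _ (F_bl hk (h k))).2 h2.1 h2.2
  have k1 := key ω h
  have k2 := key ω' h'
  cases hk : c.sp k
  · have := k1.2 hk
    have := k2.2 hk
    rw [abs_le]; constructor <;> linarith
  · have := k1.1 hk
    have := k2.1 hk
    rw [abs_le]; constructor <;> linarith

/-- separation of the images of two sequences which first differ at place `k`. -/
lemma sep {ω ω1 ω2 : ℕ → List ℕ} (h : c.Good ω) (h1 : c.Good ω1) (h2 : c.Good ω2) {k : ℕ}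
    (e1 : ∀ i < k, ω1 i = ω i) (e2 : ∀ i < k, ω2 i = ω i) :
    |phi (ω1 k) (XX (shf (k + 1) ω1)) - phi (ω2 k) (XX (shf (k + 1) ω2))|
      / (4 * (Q (pre ω k) : ℝ) ^ 2) ≤ |XX ω1 - XX ω2| := by
  have m1 := XX_mem (h1.gd.shf (k + 1))
  have m2 := XX_mem (h2.gd.shf (k + 1))
  rw [XX_shf h1.gd (k + 1), XX_shf h2.gd (k + 1), pre, pre, phi_append, phi_append,
    pre_congr e1, pre_congr e2]
  exact le_phi_sub (pre_pos h.gd k) (phi_nonneg m1.1) (phi_nonneg m2.1)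
    (phi_le_one (h1.gd k).1 m1.1 m1.2) (phi_le_one (h2.gd k).1 m2.1 m2.2)

lemma frost_bl {C₀ : ℝ} (hC₀ : 0 < C₀) {ω : ℕ → List ℕ} (h : c.Good ω) {k : ℕ}
    (hk : c.sp k = false) (hV : c.V ω k ≤ C₀) {D : Finset (List ℕ)} (hD : D ⊆ c.F k)
    {ω1 ω2 : ℕ → List ℕ} (h1 : c.Good ω1) (h2 : c.Good ω2)
    (e1 : ∀ i < k, ω1 i = ω i) (e2 : ∀ i < k, ω2 i = ω i) (hne : ω1 k ≠ ω2 k) :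
    c.P ω k * ∑ v ∈ D, c.p k v ≤
      C₀ * (1 / ((c.M : ℝ) + 1) / (((c.M : ℝ) + 1) ^ 2) ^ c.L / 4) ^ (-c.s) *
        |XX ω1 - XX ω2| ^ c.s := by
  have hs := c.hs
  set κ : ℝ := 1 / ((c.M : ℝ) + 1) / (((c.M : ℝ) + 1) ^ 2) ^ c.L / 4 with hκ
  have hκ0 : 0 < κ := by positivity
  have m1 := XX_mem (h1.gd.shf (k + 1))
  have m2 := XX_mem (h2.gd.shf (k + 1))
  have b1 := c.hB _ (F_bl hk (h1 k))
  have b2 := c.hB _ (F_bl hk (h2 k))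
  have hg := gap_list _ _ (b1.1.trans b2.1.symm) hne b1.2 b2.2 m1.1 m1.2 m2.1 m2.2
    (tails h1 h2 (k + 1))
  rw [b1.1] at hg
  have hQ := one_le_Q (pre_pos h.gd k)
  have hX : κ / (Q (pre ω k) : ℝ) ^ 2 ≤ |XX ω1 - XX ω2| := by
    refine le_trans ?_ (sep h h1 h2 e1 e2)
    rw [hκ, div_div _ 4]
    gcongr
  have hsum : ∑ v ∈ D, c.p k v ≤ 1 := by
    rw [← p_sum (c := c) k]
    exact Finset.sum_le_sum_of_subset_of_nonneg hD fun _ _ _ => p_nonneg _ _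
  calc c.P ω k * ∑ v ∈ D, c.p k v ≤ c.P ω k * 1 := by
        gcongr; exact P_nonneg _ _
    _ = c.V ω k * (Q (pre ω k) : ℝ) ^ (-(2 * c.s)) := by rw [mul_one, P_eq h]
    _ ≤ C₀ * (Q (pre ω k) : ℝ) ^ (-(2 * c.s)) := by gcongr
    _ = C₀ * κ ^ (-c.s) * (κ / (Q (pre ω k) : ℝ) ^ 2) ^ c.s := by
        rw [Real.div_rpow hκ0.le (by positivity), Real.rpow_neg hκ0.le,
          Real.rpow_neg (by linarith), ← Real.rpow_natCast, ← Real.rpow_mul (by linarith)]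
        have : 0 < κ ^ c.s := by positivity
        push_cast
        field_simp
    _ ≤ _ := by gcongr

lemma frost_sp {C₀ : ℝ} (hC₀ : 0 < C₀) {ω : ℕ → List ℕ} (h : c.Good ω) {k : ℕ}
    (hk : c.sp k = true) (hV : c.V ω k * c.ρ k ^ c.s ≤ C₀) {d i j : ℕ} (hij : j = i + d)
    (hd : 1 ≤ d)
    {ω1 ω2 : ℕ → List ℕ} (h1 : c.Good ω1) (h2 : c.Good ω2)
    (e1 : ∀ i < k, ω1 i = ω i) (e2 : ∀ i < k, ω2 i = ω i) (hi : ω1 k = [i]) (hj : ω2 k = [j]) :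
    c.P ω k * (((d : ℝ) + 1) / (dig (c.ρ k)).card) ≤
      4 * C₀ * (1 / ((c.M : ℝ) + 1) / 36) ^ (-c.s) * |XX ω1 - XX ω2| ^ c.s := by
  have hs := c.hs
  have hρ := c.hρ k hk
  set ρ := c.ρ k with hρd
  set η : ℝ := 1 / ((c.M : ℝ) + 1) with hη
  have hη0 : 0 < η := by positivity
  have hη1 : η ≤ 1 := by
    rw [hη, div_le_one (by positivity)]; linarith [Nat.cast_nonneg (α := ℝ) c.M]
  have m1 := XX_mem (h1.gd.shf (k + 1))
  have m2 := XX_mem (h2.gd.shf (k + 1))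
  obtain ⟨i', hi', i1, i2⟩ := F_sp hk (h1 k)
  obtain ⟨j', hj', j1, j2⟩ := F_sp hk (h2 k)
  have : i' = i := by rw [hi] at hi'; simpa using hi'.symm
  subst this
  have : j' = j := by rw [hj] at hj'; simpa using hj'.symm
  subst this
  have hd1 : (1 : ℝ) ≤ d := by exact_mod_cast hd
  have hjd : (j' : ℝ) = i' + d := by rw [hij]; push_cast; ring
  have hdρ : (d : ℝ) ≤ ρ := by linarith
  have hQ := one_le_Q (pre_pos h.gd k)
  have hX : η / 36 * (d / (ρ ^ 2 * (Q (pre ω k) : ℝ) ^ 2)) ≤ |XX ω1 - XX ω2| := by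
    refine le_trans ?_ (sep h h1 h2 e1 e2)
    rw [hi, hj]
    simp only [phi]
    have g1 := inv_gap (i := i') (j := j') (by linarith) (by linarith) m1.1 m2.1 (D := 3 * ρ)
      (by linarith [m1.2]) (by linarith [m2.2])
    have g2 := nat_gap (i := i') (j := j') (by omega) hη0 hη1 (tails h1 h2 (k + 1))
    have g3 : |(i' : ℝ) - j'| = d := by
      rw [hjd, sub_add_cancel_left, abs_neg, abs_of_nonneg (by linarith)]
    rw [g3] at g2
    calc η / 36 * (d / (ρ ^ 2 * (Q (pre ω k) : ℝ) ^ 2))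
        = (η * d) / (3 * ρ) ^ 2 / (4 * (Q (pre ω k) : ℝ) ^ 2) := by field_simp; norm_num
      _ ≤ _ := by
        gcongr
        exact le_trans (by gcongr) g1
  have hN := card_dig hρ
  have hVn := V_nonneg (c := c) ω k
  have hPn := P_nonneg (c := c) ω k
  calc c.P ω k * (((d : ℝ) + 1) / (dig ρ).card) ≤ c.P ω k * ((2 * d) / (ρ / 2)) := by
        gcongr; linarith
    _ = 4 * (c.V ω k * ρ ^ c.s) * (d / ρ) * ρ ^ (-c.s) * (Q (pre ω k) : ℝ) ^ (-(2 * c.s)) := by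
        rw [P_eq h, Real.rpow_neg (by linarith : 0 ≤ ρ)]
        have : 0 < ρ ^ c.s := by positivity
        field_simp; norm_num
    _ ≤ 4 * C₀ * (d / ρ) ^ c.s * ρ ^ (-c.s) * (Q (pre ω k) : ℝ) ^ (-(2 * c.s)) := by
        gcongr
        refine Real.self_le_rpow_of_le_one (by positivity) ?_ c.hs1
        rw [div_le_one (by linarith)]; exact hdρ
    _ = 4 * C₀ * (η / 36) ^ (-c.s) * (η / 36 * (d / (ρ ^ 2 * (Q (pre ω k) : ℝ) ^ 2))) ^ c.s := by
        rw [Real.mul_rpow (by positivity) (by positivity),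
          Real.div_rpow (by positivity) (by positivity),
          Real.div_rpow (x := (d : ℝ)) (y := ρ ^ 2 * _) (by positivity) (by positivity),
          Real.mul_rpow (x := ρ ^ 2) (by positivity) (by positivity),
          Real.rpow_neg (by positivity), Real.rpow_neg (by positivity), Real.rpow_neg (by linarith),
          ← Real.rpow_natCast, ← Real.rpow_mul (by linarith), ← Real.rpow_natCast,
          ← Real.rpow_mul (by linarith)]
        push_cast
        rw [mul_comm (2 : ℝ) c.s, Real.rpow_mul (by linarith : 0 ≤ ρ), Real.rpow_two]
        have : 0 < (η / 36) ^ c.s := by positivity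
        have : 0 < ρ ^ c.s := by positivity
        field_simp
    _ ≤ _ := by gcongr

theorem main {C₀ : ℝ} (hC₀ : 0 < C₀) (hV : ∀ ω, c.Good ω → ∀ k, c.V ω k ≤ C₀)
    (hV' : ∀ ω, c.Good ω → ∀ k, c.sp k = true → c.V ω k * c.ρ k ^ c.s ≤ C₀) :
    ENNReal.ofReal c.s ≤ dimH (XX '' {ω | c.Good ω}) := by
  classical
  have hs := c.hs
  set C1 := C₀ * (1 / ((c.M : ℝ) + 1) / (((c.M : ℝ) + 1) ^ 2) ^ c.L / 4) ^ (-c.s) with hC1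
  set C2 := 4 * C₀ * (1 / ((c.M : ℝ) + 1) / 36) ^ (-c.s) with hC2
  have p1 : 0 < C1 := by positivity
  have p2 : 0 < C2 := by positivity
  refine mass_dist c.F c.p p_nonneg p_sum XX measurable_XX c.hs (C := C1 + C2) (by positivity) ?_ ?_
  · intro ω hω k D hD hDn
    cases hk : c.sp k
    · obtain ⟨w, hw, w', hw', hne⟩ := hDn
      refine ⟨w, hw, w', hw', fun ω1 ω2 h1 h2 e1 e2 f1 f2 => ?_⟩
      refine (frost_bl hC₀ hω hk (hV ω hω k) hD h1 h2 e1 e2 (by rw [f1, f2]; exact hne)).trans ?_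
      gcongr
      linarith
    · have hFD : ∀ w ∈ D, ∃ a : ℕ, w = [a] := fun w hw => by
        obtain ⟨a, ha, -⟩ := F_sp hk (hD hw); exact ⟨a, ha⟩
      let I : Finset ℕ := D.image fun w => w.sum
      have hI : ∀ a, a ∈ I ↔ [a] ∈ D := by
        intro a
        simp only [I, Finset.mem_image]
        constructor
        · rintro ⟨w, hw, rfl⟩
          obtain ⟨b, rfl⟩ := hFD w hw
          simpa using hw
        · intro ha; exact ⟨[a], ha, by simp⟩
      have hDI : D.card = I.card := by
        rw [Finset.card_image_of_injOn]
        intro w hw w' hw' hh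
        obtain ⟨b, rfl⟩ := hFD w hw
        obtain ⟨b', rfl⟩ := hFD w' hw'
        simpa using hh
      have hcard : 2 ≤ I.card := by
        rw [← hDI]; exact Finset.one_lt_card_iff_nontrivial.2 hDn
      have hIn : I.Nonempty := Finset.card_pos.1 (by omega)
      have hsub : I ⊆ Finset.Icc (I.min' hIn) (I.max' hIn) := fun a ha =>
        Finset.mem_Icc.2 ⟨Finset.min'_le _ _ ha, Finset.le_max' _ _ ha⟩
      have hc := Finset.card_le_card hsub
      rw [Nat.card_Icc] at hc
      obtain ⟨d, hd⟩ : ∃ d, I.max' hIn = I.min' hIn + d :=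
        Nat.exists_eq_add_of_le (Finset.min'_le _ _ (Finset.max'_mem _ _))
      refine ⟨[I.min' hIn], (hI _).1 (Finset.min'_mem _ _), [I.max' hIn],
        (hI _).1 (Finset.max'_mem _ _), fun ω1 ω2 h1 h2 e1 e2 f1 f2 => ?_⟩
      have hsum : ∑ v ∈ D, c.p k v ≤ ((d : ℝ) + 1) / (dig (c.ρ k)).card := by
        simp only [p, hk, cond_true, Finset.sum_const, nsmul_eq_mul]
        rw [mul_one_div, hDI]
        gcongr
        exact_mod_cast (by omega : I.card ≤ d + 1)
      have := frost_sp hC₀ hω hk (hV' ω hω k hk) hd (by omega) h1 h2 e1 e2 f1 f2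
      calc (∏ i ∈ Finset.range k, c.p i (ω i)) * ∑ v ∈ D, c.p k v
          ≤ c.P ω k * (((d : ℝ) + 1) / (dig (c.ρ k)).card) := by
            have := P_nonneg (c := c) ω k
            exact mul_le_mul_of_nonneg_left hsum this
        _ ≤ _ := this
        _ ≤ _ := by gcongr; linarith
  · intro ω hω
    have hω : c.Good ω := hω
    have ht : Tendsto (fun k : ℕ => C₀ * (k : ℝ) ^ (-(2 * c.s))) atTop (nhds 0) := by
      have := (tendsto_rpow_neg_atTop (by linarith : 0 < 2 * c.s)).comp tendsto_natCast_atTop_atTop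
      simpa using this.const_mul C₀
    refine squeeze_zero' (Eventually.of_forall fun k => P_nonneg (c := c) ω k) ?_ ht
    filter_upwards [eventually_ge_atTop 1] with k hk
    have hk' : (1 : ℝ) ≤ k := by exact_mod_cast hk
    have h2 := k_le_Q hω.gd k
    have h3 := hV ω hω k
    change c.P ω k ≤ _
    rw [P_eq hω]
    calc c.V ω k * (Q (pre ω k) : ℝ) ^ (-(2 * c.s)) ≤ C₀ * (Q (pre ω k) : ℝ) ^ (-(2 * c.s)) := by
          gcongr
      _ ≤ C₀ * (k : ℝ) ^ (-(2 * c.s)) := by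
          gcongr 1
          exact Real.rpow_le_rpow_of_nonpos (by linarith) h2 (by linarith)

end Cfg

end HLS

namespace HLS

/-- starting index of the stage containing the piece `k`; a stage starting at `σ` has
`r * σ + K` blocks followed by two special digits. -/
def sig (r K : ℕ) : ℕ → ℕ
  | 0 => 0
  | k + 1 => if k = sig r K k + (r * sig r K k + K) + 1 then k + 1 else sig r K k

/-- the index of the first special piece in the stage containing `k`. -/
def spI (r K k : ℕ) : ℕ := sig r K k + (r * sig r K k + K)

lemma sig_bd (r K k : ℕ) : sig r K k ≤ k ∧ k ≤ spI r K k + 1 := by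
  unfold spI
  induction k with
  | zero => simp [sig]
  | succ k ih =>
    rw [sig]
    split_ifs with h
    · constructor <;> omega
    · constructor <;> omega

lemma sig_same {r K k : ℕ} (h : k ≤ spI r K k) : sig r K (k + 1) = sig r K k := by
  unfold spI at h
  rw [sig, if_neg (by omega)]

lemma sig_next {r K k : ℕ} (h : k = spI r K k + 1) : sig r K (k + 1) = k + 1 := by
  unfold spI at h
  rw [sig, if_pos h]

lemma sig_const {r K k : ℕ} (j : ℕ) (h : k + j ≤ spI r K k) : sig r K (k + j) = sig r K k := by
  induction j with
  | zero => rfl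
  | succ j ih =>
    have h1 := ih (by omega)
    rw [← add_assoc, sig_same (by rw [spI, h1, ← spI]; omega), h1]

lemma exists_spI (r K N : ℕ) : ∃ k, N ≤ k ∧ k = spI r K k := by
  have key : ∀ N, N ≤ spI r K N → ∃ k, N ≤ k ∧ k = spI r K k := by
    intro N hN
    obtain ⟨j, hj⟩ := Nat.exists_eq_add_of_le hN
    refine ⟨N + j, by omega, ?_⟩
    rw [spI, sig_const j hj.ge, ← spI, hj]
  rcases Nat.lt_or_ge (spI r K N) N with h | h
  · have h1 := (sig_bd r K N).2
    have h2 := sig_next (r := r) (K := K) (k := N) (by omega)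
    obtain ⟨k, hk, hk'⟩ := key (N + 1) (by rw [spI, h2]; omega)
    exact ⟨k, by omega, hk'⟩
  · exact key N h

def posn (r K L : ℕ) : ℕ → ℕ
  | 0 => 0
  | k + 1 => posn r K L k + (if k < spI r K k then L else 1)

lemma posn_le {r K L : ℕ} (hL : 1 ≤ L) (k : ℕ) : k ≤ posn r K L k ∧ posn r K L k ≤ L * k := by
  induction k with
  | zero => simp [posn]
  | succ k ih =>
    rw [posn, mul_add]
    split_ifs <;> constructor <;> omega

noncomputable def rho (A₁ A₂ c₁ c₂ : ℝ) (r K L k : ℕ) : ℝ :=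
  if k = spI r K k then c₁ * A₁ ^ (posn r K L k + 1) else c₂ * A₂ ^ (posn r K L k)

section

variable {A₁ A₂ c₁ c₂ θ : ℝ} {r K : ℕ} {c : Cfg}

lemma atA (hθ : 1 ≤ θ) (hr : θ ^ c.L ≤ 2 ^ r) {V : ℝ} (hV : 0 ≤ V) {k : ℕ} (hk : k = spI r K k)
    (h : V * (2 * θ ^ c.L) ^ (k - sig r K k) ≤ 1) :
    V * θ ^ (posn r K c.L k + 1) ≤ θ / 2 ^ K := by
  set σ := sig r K k with hσ
  have hkσ : k - σ = r * σ + K := by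
    have : k = σ + (r * σ + K) := hk
    omega
  have hkL : c.L * k = c.L * σ + c.L * (r * σ + K) := by
    have : k = σ + (r * σ + K) := hk
    rw [← mul_add, ← this]
  rw [hkσ] at h
  have h1 : θ ^ (posn r K c.L k + 1) ≤ θ ^ (c.L * k + 1) :=
    pow_le_pow_right₀ hθ (by have := (posn_le (r := r) (K := K) c.hL k).2; omega)
  have h2 : θ ^ (c.L * σ) ≤ 2 ^ (r * σ) := by
    rw [pow_mul, pow_mul]; gcongr
  have h0 : 0 < θ := by linarith
  rw [le_div_iff₀ (by positivity)]
  calc V * θ ^ (posn r K c.L k + 1) * 2 ^ K ≤ V * θ ^ (c.L * k + 1) * 2 ^ K := by gcongr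
    _ = V * θ * θ ^ (c.L * σ) * θ ^ (c.L * (r * σ + K)) * 2 ^ K := by
        rw [pow_succ, hkL, pow_add]; ring
    _ ≤ V * θ * 2 ^ (r * σ) * θ ^ (c.L * (r * σ + K)) * 2 ^ K := by gcongr
    _ = θ * (V * (2 * θ ^ c.L) ^ (r * σ + K)) := by
        rw [mul_pow, ← pow_mul, pow_add 2]; ring
    _ ≤ θ * 1 := by gcongr
    _ = θ := mul_one _

lemma stage (hA₁ : 1 < A₁) (hA₂ : 1 < A₂) (hc₁ : 0 < c₁) (hc₂ : 0 < c₂) (hθ : 1 ≤ θ)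
    (hθ1 : A₁ ^ c.s ≤ θ) (hθ2 : A₁ ^ (2 * c.s - 1) * A₂ ^ c.s ≤ θ) (hZ : 8 * θ ^ c.L ≤ c.Z)
    (hr : θ ^ c.L ≤ 2 ^ r)
    (hK : 1024 * c₁ ^ (2 * c.s - 1) * c₂ ^ c.s * (θ / 2 ^ K) ≤ 1) (hK' : θ / 2 ^ K ≤ 1)
    (hsp : ∀ k, c.sp k = !decide (k < spI r K k))
    (hρ : ∀ k, c.ρ k = rho A₁ A₂ c₁ c₂ r K c.L k) :
    ∃ C₀ : ℝ, 0 < C₀ ∧ (∀ ω, c.Good ω → ∀ k, c.V ω k ≤ C₀) ∧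
      (∀ ω, c.Good ω → ∀ k, c.sp k = true → c.V ω k * c.ρ k ^ c.s ≤ C₀) := by
  have hs := c.hs
  have hs1 := c.hs1
  have hA0 : 0 < A₁ := by linarith
  have hA20 : 0 < A₂ := by linarith
  have h0 : 0 < θ := by linarith
  set G : ℝ := 32 * c₁ ^ (2 * c.s - 1) * c₂ ^ c.s * (θ / 2 ^ K) with hG
  have hG0 : 0 < G := by positivity
  have inv : ∀ ω, c.Good ω → ∀ k,
      (k ≤ spI r K k → c.V ω k * (2 * θ ^ c.L) ^ (k - sig r K k) ≤ 1) ∧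
      (k = spI r K k + 1 → c.V ω k * c.ρ k ^ c.s ≤ G) := by
    intro ω hω k
    induction k with
    | zero =>
      refine ⟨fun _ => ?_, fun h => by simp at h⟩
      simp [Cfg.V, Cfg.P, pre, Q_nil]
    | succ k ih =>
      have hVn := Cfg.V_nonneg (c := c) ω k
      rcases lt_trichotomy k (spI r K k) with hk | hk | hk
      · have e := sig_same hk.le
        have e' : spI r K (k + 1) = spI r K k := by rw [spI, e, spI]
        refine ⟨fun _ => ?_, fun h => by omega⟩
        have h1 := Cfg.V_bl hω (k := k) (by rw [hsp]; simp [hk])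
        rw [e, Nat.sub_add_comm (sig_bd r K k).1, pow_succ]
        have h2 : 4 / c.Z * (2 * θ ^ c.L) ≤ 1 := by
          have := c.Z_pos
          rw [div_mul_eq_mul_div, div_le_one this]; linarith
        calc c.V ω (k + 1) * ((2 * θ ^ c.L) ^ (k - sig r K k) * (2 * θ ^ c.L))
            ≤ (c.V ω k * (4 / c.Z)) * ((2 * θ ^ c.L) ^ (k - sig r K k) * (2 * θ ^ c.L)) := by
              gcongr
          _ = (c.V ω k * (2 * θ ^ c.L) ^ (k - sig r K k)) * (4 / c.Z * (2 * θ ^ c.L)) := by ring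
          _ ≤ 1 * 1 := by
              have := c.Z_pos
              exact mul_le_mul (ih.1 hk.le) h2 (by positivity) zero_le_one
          _ = 1 := one_mul 1
      · have e := sig_same hk.le
        have e' : spI r K (k + 1) = spI r K k := by rw [spI, e, spI]
        refine ⟨fun h => by omega, fun _ => ?_⟩
        have h1 := Cfg.V_sp hω (k := k) (by rw [hsp]; simp [← hk])
        have h2 := atA hθ hr hVn hk (ih.1 hk.le)
        have eρ : c.ρ k = c₁ * A₁ ^ (posn r K c.L k + 1) := by rw [hρ, rho, if_pos hk]
        have eρ' : c.ρ (k + 1) = c₂ * A₂ ^ (posn r K c.L k + 1) := by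
          rw [hρ, rho, if_neg (by omega), posn, if_neg (by omega)]
        set n := posn r K c.L k + 1
        rw [eρ] at h1
        rw [eρ']
        calc c.V ω (k + 1) * (c₂ * A₂ ^ n) ^ c.s
            ≤ (c.V ω k * (32 * (c₁ * A₁ ^ n) ^ (2 * c.s - 1))) * (c₂ * A₂ ^ n) ^ c.s := by gcongr
          _ = 32 * c₁ ^ (2 * c.s - 1) * c₂ ^ c.s *
                (c.V ω k * (A₁ ^ (2 * c.s - 1) * A₂ ^ c.s) ^ n) := by
              rw [Real.mul_rpow (by positivity) (by positivity),
                Real.mul_rpow (by positivity) (by positivity), mul_pow,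
                ← Real.rpow_natCast, ← Real.rpow_natCast, ← Real.rpow_natCast,
                ← Real.rpow_natCast, ← Real.rpow_mul hA0.le, ← Real.rpow_mul hA0.le,
                ← Real.rpow_mul hA20.le, ← Real.rpow_mul hA20.le, mul_comm (n : ℝ),
                mul_comm (n : ℝ)]
              ring
          _ ≤ 32 * c₁ ^ (2 * c.s - 1) * c₂ ^ c.s * (c.V ω k * θ ^ n) := by gcongr
          _ ≤ G := by rw [hG]; gcongr
      · have hk1 : k = spI r K k + 1 := by have := (sig_bd r K k).2; omega
        have e := sig_next hk1
        refine ⟨fun _ => ?_, fun h => by rw [spI, e] at h; omega⟩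
        have hspk : c.sp k = true := by rw [hsp]; simp [hk.le]
        have h1 := Cfg.V_sp hω hspk
        have h2 := ih.2 hk1
        have h3 := c.hρ k hspk
        rw [e, Nat.sub_self, pow_zero, mul_one]
        calc c.V ω (k + 1) ≤ c.V ω k * (32 * c.ρ k ^ (2 * c.s - 1)) := h1
          _ ≤ c.V ω k * (32 * c.ρ k ^ c.s) := by
              gcongr
              · linarith
              · linarith
          _ = 32 * (c.V ω k * c.ρ k ^ c.s) := by ring
          _ ≤ 32 * G := by gcongr
          _ ≤ 1 := by rw [hG]; linarith
  have bd1 : ∀ ω, c.Good ω → ∀ k, k ≤ spI r K k → c.V ω k ≤ 1 := by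
    intro ω hω k hk
    have h1 := (inv ω hω k).1 hk
    have h2 : 1 ≤ (2 * θ ^ c.L) ^ (k - sig r K k) :=
      one_le_pow₀ (by linarith [one_le_pow₀ hθ (n := c.L)])
    exact (le_mul_of_one_le_right (Cfg.V_nonneg _ _) h2).trans h1
  have bd2 : ∀ ω, c.Good ω → ∀ k, c.sp k = true → c.V ω k * c.ρ k ^ c.s ≤ c₁ ^ c.s + G := by
    intro ω hω k hk
    have hk2 : spI r K k ≤ k := by rw [hsp] at hk; simpa using hk
    have hVn := Cfg.V_nonneg (c := c) ω k
    rcases Nat.eq_or_lt_of_le hk2 with h | h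
    · have h2 := atA hθ hr hVn h.symm ((inv ω hω k).1 h.ge)
      rw [hρ, rho, if_pos h.symm]
      set n := posn r K c.L k + 1
      calc c.V ω k * (c₁ * A₁ ^ n) ^ c.s = c₁ ^ c.s * (c.V ω k * (A₁ ^ c.s) ^ n) := by
            rw [Real.mul_rpow (by positivity) (by positivity), ← Real.rpow_natCast,
              ← Real.rpow_natCast, ← Real.rpow_mul hA0.le, ← Real.rpow_mul hA0.le,
              mul_comm (n : ℝ)]
            ring
        _ ≤ c₁ ^ c.s * (c.V ω k * θ ^ n) := by gcongr
        _ ≤ c₁ ^ c.s * 1 := by gcongr; exact h2.trans hK'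
        _ ≤ _ := by linarith
    · have h1 := (inv ω hω k).2 (by have := (sig_bd r K k).2; omega)
      have : 0 < c₁ ^ c.s := by positivity
      linarith
  have hp : 0 < c₁ ^ c.s := by positivity
  refine ⟨1 + (c₁ ^ c.s + G), by positivity, fun ω hω k => ?_, fun ω hω k hk => ?_⟩
  · rcases Nat.lt_or_ge k (spI r K k + 1) with h | h
    · have := bd1 ω hω k (by omega); linarith
    · have hspk : c.sp k = true := by rw [hsp]; simp; omega
      have h1 := bd2 ω hω k hspk
      have h2 : 1 ≤ c.ρ k ^ c.s := Real.one_le_rpow (by linarith [c.hρ k hspk]) hs.le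
      have := le_mul_of_one_le_right (Cfg.V_nonneg (c := c) ω k) h2
      linarith
  · have := bd2 ω hω k hk; linarith

lemma len_posn (hsp : ∀ k, c.sp k = !decide (k < spI r K k)) {ω : ℕ → List ℕ} (h : c.Good ω)
    (k : ℕ) : (pre ω k).length = posn r K c.L k := by
  induction k with
  | zero => rfl
  | succ k ih =>
    rw [pre, List.length_append, ih, posn]
    congr 1
    split_ifs with hk
    · exact (c.hB _ (Cfg.F_bl (by rw [hsp]; simp [hk]) (h k))).1
    · obtain ⟨a, ha, -⟩ := Cfg.F_sp (by rw [hsp]; simp only [hk, decide_false, Bool.not_false]) (h k)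
      rw [ha]; rfl

lemma incl (hsp : ∀ k, c.sp k = !decide (k < spI r K k))
    (hρ : ∀ k, c.ρ k = rho A₁ A₂ c₁ c₂ r K c.L k) :
    XX '' {ω | c.Good ω} ⊆ EE A₁ A₂ c₁ c₂ ∪ Set.range ((↑) : ℚ → ℝ) := by
  rintro _ ⟨ω, hω, rfl⟩
  have hω : c.Good ω := hω
  by_cases hi : Irrational (XX ω)
  · refine Or.inl ⟨⟨XX_pos hω.gd, XX_lt_one hω.gd⟩, hi, ?_⟩
    refine Set.infinite_of_forall_exists_gt fun N => ?_
    obtain ⟨k, hkN, hk⟩ := exists_spI r K N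
    have e : spI r K (k + 1) = spI r K k := by rw [spI, sig_same hk.le, spI]
    obtain ⟨a, ha, a1, a2⟩ := Cfg.F_sp (k := k) (by rw [hsp]; simp [← hk]) (hω k)
    obtain ⟨b, hb, b1, b2⟩ := Cfg.F_sp (k := k + 1) (by rw [hsp, e]; simp [← hk]) (hω (k + 1))
    have p1 := pq_XX hω.gd ha
    have p2 := pq_XX hω.gd hb
    have e2 : posn r K c.L (k + 1) = posn r K c.L k + 1 := by rw [posn, if_neg (by omega)]
    rw [len_posn hsp hω] at p1 p2
    rw [hρ, rho, if_pos hk] at a1 a2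
    rw [hρ, rho, if_neg (by omega), e2] at b1 b2
    rw [e2] at p2
    refine ⟨posn r K c.L k + 1, ⟨⟨?_, ?_⟩, ⟨?_, ?_⟩⟩, ?_⟩
    · rwa [p1]
    · rwa [p1]
    · rwa [p2]
    · rwa [p2]
    · have := (posn_le (r := r) (K := K) c.hL k).1; omega
  · exact Or.inr (by simpa [Irrational] using hi)

end

lemma lower_aux {A₁ A₂ c₁ c₂ : ℝ} (hA₁ : 1 < A₁) (hA₂ : 1 < A₂) (hc₁ : 0 < c₁) (hc₂ : 0 < c₂)
    {s : ℝ} (hs : 0 < s) (h : s < min (sExp A₁) (gExp (A₁ * A₂) A₁)) :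
    ENNReal.ofReal s ≤ dimH (EE A₁ A₂ c₁ c₂) := by
  have hs1 : s ≤ 1 := (h.le.trans (min_le_left _ _)).trans (sExp_le_one hA₁.le)
  obtain ⟨L, M, hL, hM, B, hB, hZ⟩ := blocks hA₁ hA₂ hs h
  set θ := max (A₁ ^ s) (A₁ ^ (2 * s - 1) * A₂ ^ s) with hθd
  have hθ : 1 ≤ θ := (Real.one_le_rpow hA₁.le hs.le).trans (le_max_left _ _)
  have h0 : 0 < θ := by linarith
  have hA0 : 0 < A₁ := by linarith
  have hA20 : 0 < A₂ := by linarith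
  have t2 : Tendsto (fun n : ℕ => (2 : ℝ) ^ n) atTop atTop :=
    tendsto_pow_atTop_atTop_of_one_lt (by norm_num)
  obtain ⟨r, hr⟩ := (t2.eventually_ge_atTop (θ ^ L)).exists
  have t3 := (tendsto_pow_atTop_atTop_of_one_lt hA₁).const_mul_atTop hc₁
  have t4 := (tendsto_pow_atTop_atTop_of_one_lt hA₂).const_mul_atTop hc₂
  obtain ⟨K, ⟨⟨k1, k2⟩, k3⟩, k4⟩ := ((((t2.eventually_ge_atTop θ).and (t2.eventually_ge_atTop
    (1024 * c₁ ^ (2 * s - 1) * c₂ ^ s * θ))).and (t3.eventually_ge_atTop 2)).and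
    (t4.eventually_ge_atTop 2)).exists
  have hρ : ∀ k, (!decide (k < spI r K k)) = true → 2 ≤ rho A₁ A₂ c₁ c₂ r K L k := by
    intro k hk
    have hk : spI r K k ≤ k := by simpa using hk
    have hp := (posn_le (r := r) (K := K) hL k).1
    have hKp : K ≤ posn r K L k := by unfold spI at hk; omega
    rw [rho]
    split_ifs
    · refine k3.trans ?_
      have := pow_le_pow_right₀ hA₁.le (show K ≤ posn r K L k + 1 by omega)
      gcongr
    · refine k4.trans ?_
      have := pow_le_pow_right₀ hA₂.le hKp
      gcongr
  let c : Cfg :=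
    { s := s, hs := hs, hs1 := hs1, B := B, L := L, M := M, hL := hL, hM := hM, hB := hB
      hZ := lt_of_lt_of_le (by positivity) hZ
      sp := fun k => !decide (k < spI r K k)
      ρ := rho A₁ A₂ c₁ c₂ r K L
      hρ := hρ }
  obtain ⟨C₀, hC₀, hV, hV'⟩ := stage (c := c) (r := r) (K := K) hA₁ hA₂ hc₁ hc₂ hθ
    (le_max_left _ _) (le_max_right _ _) hZ hr
    (by rw [mul_div_assoc', div_le_one (by positivity)]; exact k2)
    (by rw [div_le_one (by positivity)]; exact k1) (fun _ => rfl) (fun _ => rfl)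
  have h1 := Cfg.main hC₀ hV hV'
  have h2 := h1.trans (dimH_mono (incl (c := c) (r := r) (K := K) (A₁ := A₁) (A₂ := A₂)
    (c₁ := c₁) (c₂ := c₂) (fun _ => rfl) (fun _ => rfl)))
  rw [dimH_union, dimH_countable (Set.countable_range _)] at h2
  simpa using h2

lemma lower {A₁ A₂ c₁ c₂ : ℝ} (hA₁ : 1 < A₁) (hA₂ : 1 < A₂) (hc₁ : 0 < c₁) (hc₂ : 0 < c₂) :
    ENNReal.ofReal (min (sExp A₁) (gExp (A₁ * A₂) A₁)) ≤ dimH (EE A₁ A₂ c₁ c₂) := by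
  refine le_of_forall_lt fun x hx => ?_
  obtain ⟨y, hxy, hy⟩ := ENNReal.lt_iff_exists_nnreal_btwn.1 hx
  refine hxy.trans_le ?_
  have hy' : (y : ℝ) < min (sExp A₁) (gExp (A₁ * A₂) A₁) := by
    rw [← ENNReal.ofReal_coe_nnreal] at hy
    exact (ENNReal.ofReal_lt_ofReal_iff_of_nonneg y.2).1 hy
  have hy0 : 0 < (y : ℝ) := by
    have : (0 : ENNReal) < y := lt_of_le_of_lt zero_le hxy
    exact_mod_cast this
  have := lower_aux (c₁ := c₁) (c₂ := c₂) hA₁ hA₂ hc₁ hc₂ hy0 hy'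
  rwa [ENNReal.ofReal_coe_nnreal] at this

end HLS

theorem hussain_li_shulga (A₁ A₂ c₁ c₂ : ℝ) (hA₁ : 1 < A₁) (hA₂ : 1 < A₂)
    (hc₁ : 0 < c₁) (hc₂ : 0 < c₂) :
    dimH {x : ℝ | x ∈ Set.Ioo (0 : ℝ) 1 ∧ Irrational x ∧
      {n : ℕ | (c₁ * A₁ ^ n ≤ (pq x n : ℝ) ∧ (pq x n : ℝ) < 2 * (c₁ * A₁ ^ n)) ∧
        (c₂ * A₂ ^ n ≤ (pq x (n + 1) : ℝ) ∧
          (pq x (n + 1) : ℝ) < 2 * (c₂ * A₂ ^ n))}.Infinite} =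
    ENNReal.ofReal (min (sExp A₁) (gExp (A₁ * A₂) A₁)) := by
  exact le_antisymm (HLS.upper hA₁ hA₂ hc₁ hc₂) (HLS.lower hA₁ hA₂ hc₁ hc₂)
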